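/- arXiv:1810.07244 — 2 statements merged into one kernel-verified Lean document; each statement's English description precedes it below -/
import Mathlib

section
/- Let h be an orientation-preserving diffeomorphism of the circle with irrational rotation number, and suppose h is not C∞-conjugate to a rotation. Then every continuous path γ: [0,1] → Z∞(h) (the C∞ centralizer of h, with the uniform topology) is constant. -/
/-- A circle homeomorphism is a `C^∞` diffeomorphism if it and its inverse admit `C^∞`
degree-one lifts `ℝ → ℝ`. -/
def IsSmoothCircleDiffeo (g : UnitAddCircle ≃ₜ UnitAddCircle) : Prop :=
  ∃ G Ginv : ℝ → ℝ, ContDiff ℝ (⊤ : ℕ∞) G ∧ ContDiff ℝ (⊤ : ℕ∞) Ginv ∧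
    (∀ x, G (x + 1) = G x + 1) ∧ (∀ x, Ginv (x + 1) = Ginv x + 1) ∧
    (∀ x : ℝ, ((G x : ℝ) : UnitAddCircle) = g (x : UnitAddCircle)) ∧
    (∀ x : ℝ, ((Ginv x : ℝ) : UnitAddCircle) = g.symm (x : UnitAddCircle))

/-!
All homeomorphisms are lifted to `ℝ`. Let `H` be a lift of `h`, with irrational translation number
`α`, and let `φ` be its Poincaré semiconjugacy, `φ ∘ H = φ + α`. Since `φ` is unique up to an
additive constant, it semiconjugates every lift `G` commuting with `H` to the translation by the
translation number `τ(G)`. By a distortion argument in the style of Kopell on the plateaus of `φ`,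
`τ(G) = 0` forces `G = 1`, so a nonconstant path in the centralizer has nonconstant rotation number.
A proper subgroup of the circle contains no nontrivial connected set, hence every translation is
semiconjugate by `φ` to a diffeomorphism commuting with `h`.

This replaces the theorems of Denjoy and Yoccoz. A plateau of `φ` would be moved to uncountably many
disjoint intervals, so `φ` is a homeomorphism; and all translations are `C^n` in the coordinate
`ψ = φ⁻¹`. A Baire category argument bounds `log ψ'`, whose differences
`log ψ'(s + c) - log ψ'(s)` are continuous for all `c`, and such a function is itself continuous.
Bootstrapping gives that `ψ` is `C^n`, so `h` would be `C^n`-conjugate to a rotation.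
-/

open Set Filter Topology MeasureTheory Function CircleDeg1Lift
open Multiplicative (ofAdd)
open scoped NNReal ContDiff fwdDiff Pointwise

section UniformLipschitz

variable {G : Type*} [AddGroup G] [TopologicalSpace G] [IsTopologicalAddGroup G] [BaireSpace G]

theorem exists_subset_of_isCompact_of_iUnion_isClosed {M : ℕ → Set G} {K : Set G}
    (hK : IsCompact K) (hmono : Monotone M) (hclosed : ∀ n, IsClosed (M n))
    (hcover : ⋃ n, M n = univ) (hadd : ∀ n, ∃ m, M n + M n ⊆ M m) : ∃ n, K ⊆ M n := by
  obtain ⟨n, x, hx⟩ := nonempty_interior_of_iUnion_of_closed hclosed hcover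
  refine hK.induction_on ⟨0, empty_subset _⟩ (fun s t hst ⟨m, hm⟩ => ⟨m, hst.trans hm⟩) ?_ ?_
  · rintro s t ⟨k, hk⟩ ⟨l, hl⟩
    exact ⟨max k l, union_subset (hk.trans (hmono (le_max_left k l)))
      (hl.trans (hmono (le_max_right k l)))⟩
  · intro g _
    obtain ⟨m, hm⟩ := mem_iUnion.1 (hcover.ge (mem_univ (-x + g)))
    obtain ⟨l, hl⟩ := hadd (max n m)
    refine ⟨{y | y + (-g + x) ∈ M n}, mem_nhdsWithin_of_mem_nhds ?_, l, fun y hy => hl ?_⟩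
    · refine (continuous_add_const (-g + x)).continuousAt.preimage_mem_nhds ?_
      simpa using mem_interior_iff_mem_nhds.1 hx
    · rw [← add_neg_cancel_right y (-g + x), neg_add_rev, neg_neg]
      exact add_mem_add (hmono (le_max_left n m) hy) (hmono (le_max_right n m) hm)

/-- A uniform boundedness principle for Lipschitz constants. -/
theorem exists_forall_lipschitzWith_of_isCompact {X Y : Type*} [PseudoEMetricSpace X]
    [PseudoEMetricSpace Y] {f : G → X → Y} {K : Set G} (hK : IsCompact K)
    (hcont : ∀ x, Continuous fun c => f c x) (hlip : ∀ c, ∃ C, LipschitzWith C (f c))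
    (hadd : ∀ C, ∃ D, ∀ c d, LipschitzWith C (f c) → LipschitzWith C (f d) →
      LipschitzWith D (f (c + d))) :
    ∃ C, ∀ c ∈ K, LipschitzWith C (f c) := by
  obtain ⟨n, hn⟩ := exists_subset_of_isCompact_of_iUnion_isClosed hK
    (M := fun n : ℕ => {c | LipschitzWith n (f c)})
    (fun m n hmn c hc => hc.weaken (Nat.cast_le.2 hmn))
    (fun n => isClosed_setOfPred_lipschitzWith (n : ℝ≥0) |>.preimage (continuous_pi hcont))
    (eq_univ_of_forall fun c => by
      obtain ⟨C, hC⟩ := hlip c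
      obtain ⟨n, hn⟩ := exists_nat_ge C
      exact mem_iUnion.2 ⟨n, hC.weaken hn⟩)
    (fun n => by
      obtain ⟨D, hD⟩ := hadd n
      obtain ⟨m, hm⟩ := exists_nat_ge D
      refine ⟨m, ?_⟩
      rintro _ ⟨c, hc, d, hd, rfl⟩
      exact (hD c d hc hd).weaken hm)
  exact ⟨n, fun c hc => hn hc⟩

end UniformLipschitz

section Periodic

theorem exists_forall_norm_le_of_periodic {E : Type*} [SeminormedAddCommGroup E] {f : ℝ → E} {p : ℝ}
    (hp : Periodic f p) (hp0 : p ≠ 0) (hf : Continuous f) : ∃ C, ∀ x, ‖f x‖ ≤ C := by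
  obtain ⟨C, hC⟩ := (hp.isBounded_of_continuous hp0 hf).exists_norm_le
  exact ⟨C, fun x => hC _ ⟨x, rfl⟩⟩

theorem uniformContinuous_of_periodic {α : Type*} [UniformSpace α] {f : ℝ → α}
    (hp : Periodic f 1) (hf : Continuous f) : UniformContinuous f := by
  have hcoe : UniformContinuous ((↑) : ℝ → UnitAddCircle) :=
    uniformContinuous_addMonoidHom_of_continuous (f := QuotientAddGroup.mk' _)
      (AddCircle.continuous_mk' 1)
  exact (CompactSpace.uniformContinuous_of_continuous (f := hp.lift)
    (QuotientAddGroup.isQuotientMap_mk _ |>.continuous_iff.2 hf)).comp hcoe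

theorem periodic_deriv_of_map_add_eq_map_add {E : Type*} [NormedAddCommGroup E] [NormedSpace ℝ E]
    {f : ℝ → E} {p : ℝ} {k : E} (hf : ∀ x, f (x + p) = f x + k) : Periodic (deriv f) p := by
  intro x
  rw [← deriv_comp_add_const, funext hf, deriv_add_const]

theorem exists_lipschitzWith_of_periodic_deriv {E : Type*} [NormedAddCommGroup E]
    [NormedSpace ℝ E] {f : ℝ → E} {p : ℝ} (hf : ContDiff ℝ 1 f) (hp : Periodic (deriv f) p)
    (hp0 : p ≠ 0) : ∃ C, LipschitzWith C f := by
  obtain ⟨C, hC⟩ := exists_forall_norm_le_of_periodic hp hp0 (hf.continuous_deriv le_rfl)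
  exact ⟨C.toNNReal, lipschitzWith_of_nnnorm_deriv_le hf.differentiable_one fun x =>
    NNReal.le_toNNReal_of_coe_le (hC x)⟩

end Periodic

section DifferenceProperty

theorem deriv_fwdDiff {E : Type*} [NormedAddCommGroup E] [NormedSpace ℝ E] {f : ℝ → E}
    (hf : Differentiable ℝ f) (c : ℝ) : deriv (Δ_[c] f) = Δ_[c] (deriv f) := by
  funext x
  have hshift : DifferentiableAt ℝ (fun x => f (x + c)) x := (hf _).comp x (by fun_prop)
  change deriv (fun y => f (y + c) - f y) x = deriv f (x + c) - deriv f x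
  rw [deriv_fun_sub hshift (hf x), deriv_comp_add_const]

variable {f : ℝ → ℝ} {C : ℝ}

theorem eq_integral_sub_integral_fwdDiff (hm : Measurable f) (hp : Periodic f 1)
    (hb : ∀ x, |f x| ≤ C) (x : ℝ) :
    f x = (∫ c in (0 : ℝ)..1, f c) - ∫ c in (0 : ℝ)..1, Δ_[c] f x := by
  have hint : IntervalIntegrable (fun c => f (x + c)) volume 0 1 := by
    rw [intervalIntegrable_iff]
    exact Measure.integrableOn_of_bounded (M := C) (by simp)
      (hm.comp (measurable_const_add x)).aestronglyMeasurable (Eventually.of_forall fun c => hb _)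
  have hshift : ∫ c in (0 : ℝ)..1, f (x + c) = ∫ c in (0 : ℝ)..1, f c := by
    simpa using hp.intervalIntegral_add_eq x 0
  simp only [fwdDiff]
  rw [intervalIntegral.integral_sub hint intervalIntegrable_const, hshift]
  simp

theorem continuous_of_forall_continuous_fwdDiff (hm : Measurable f) (hp : Periodic f 1)
    (hb : ∀ x, |f x| ≤ C) (hd : ∀ c, Continuous (Δ_[c] f)) : Continuous f := by
  rw [funext (eq_integral_sub_integral_fwdDiff hm hp hb)]
  refine continuous_const.sub (intervalIntegral.continuous_of_dominated_interval
    (bound := fun _ => C + C) (fun x => ?_) (fun x => ?_) intervalIntegrable_const ?_)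
  · exact ((hm.comp (measurable_const_add x)).sub measurable_const).aestronglyMeasurable
  · exact Eventually.of_forall fun c _ => (abs_sub _ _).trans (add_le_add (hb _) (hb _))
  · exact Eventually.of_forall fun c _ => hd c

theorem lipschitzWith_fwdDiff_add {G E : Type*} [SeminormedAddCommGroup G]
    [SeminormedAddCommGroup E] {f : G → E} {K L : ℝ≥0} {c d : G}
    (hc : LipschitzWith K (Δ_[c] f)) (hd : LipschitzWith L (Δ_[d] f)) :
    LipschitzWith (K + L) (Δ_[c + d] f) := by
  have hshift : LipschitzWith K fun x => Δ_[c] f (x + d) := by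
    simpa [comp_def] using hc.comp (isometry_add_right d).lipschitz
  convert hshift.add hd using 2 with x
  simp only [fwdDiff, add_assoc, add_comm c d]
  abel

theorem exists_lipschitzWith_of_forall_contDiff_fwdDiff (hf : Continuous f) (hp : Periodic f 1)
    (hd : ∀ c, ContDiff ℝ 1 (Δ_[c] f)) : ∃ K, LipschitzWith K f := by
  have hd_periodic (c : ℝ) : Periodic (Δ_[c] f) 1 := fun x => by
    simp only [fwdDiff, add_right_comm x 1 c, hp _]
  obtain ⟨K, hK⟩ := exists_forall_lipschitzWith_of_isCompact
    (isCompact_Icc (a := (0 : ℝ)) (b := 1)) (f := fun c => Δ_[c] f)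
    (fun x => by unfold fwdDiff; fun_prop)
    (fun c => exists_lipschitzWith_of_periodic_deriv (hd c)
      (periodic_deriv_of_map_add_eq_map_add (k := 0) (by simpa using! hd_periodic c)) one_ne_zero)
    (fun K => ⟨K + K, fun c d hc hd => lipschitzWith_fwdDiff_add hc hd⟩)
  obtain ⟨C, hC⟩ := exists_forall_norm_le_of_periodic hp one_ne_zero hf
  have hint (x : ℝ) : IntervalIntegrable (fun c => Δ_[c] f x) volume 0 1 :=
    Continuous.intervalIntegrable (by unfold fwdDiff; fun_prop) _ _
  refine ⟨K, LipschitzWith.of_dist_le_mul fun x y => ?_⟩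
  calc dist (f x) (f y)
      = ‖∫ c in (0 : ℝ)..1, (Δ_[c] f y - Δ_[c] f x)‖ := by
        rw [intervalIntegral.integral_sub (hint y) (hint x), Real.dist_eq, Real.norm_eq_abs,
          eq_integral_sub_integral_fwdDiff hf.measurable hp hC x,
          eq_integral_sub_integral_fwdDiff hf.measurable hp hC y, sub_sub_sub_cancel_left]
    _ ≤ K * dist x y * |1 - 0| := by
        refine intervalIntegral.norm_integral_le_of_norm_le_const fun c hc => ?_
        rw [uIoc_of_le zero_le_one] at hc
        rw [← dist_eq_norm, dist_comm x y]
        exact (hK c (Ioc_subset_Icc_self hc)).dist_le_mul y x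
    _ = K * dist x y := by simp

theorem differentiable_of_differentiableAt_of_forall_fwdDiff {E : Type*} [NormedAddCommGroup E]
    [NormedSpace ℝ E] {f : ℝ → E} {x₀ : ℝ} (h₀ : DifferentiableAt ℝ f x₀)
    (hd : ∀ c, Differentiable ℝ (Δ_[c] f)) : Differentiable ℝ f := by
  intro x
  have hshift : DifferentiableAt ℝ (fun y => f (y + (x - x₀))) x₀ := by
    simpa [fwdDiff, Pi.add_def] using (hd (x - x₀) x₀).add h₀
  rw [← add_sub_cancel x₀ x]
  exact differentiableAt_comp_add_const.1 hshift

theorem contDiff_one_of_forall_contDiff_fwdDiff (hf : Continuous f) (hp : Periodic f 1)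
    (hd : ∀ c, ContDiff ℝ 1 (Δ_[c] f)) : ContDiff ℝ 1 f := by
  obtain ⟨K, hK⟩ := exists_lipschitzWith_of_forall_contDiff_fwdDiff hf hp hd
  obtain ⟨x₀, hx₀⟩ := hK.ae_differentiableAt_real.exists
  have hdiff : Differentiable ℝ f :=
    differentiable_of_differentiableAt_of_forall_fwdDiff hx₀ fun c => (hd c).differentiable_one
  refine contDiff_one_iff_deriv.2 ⟨hdiff, continuous_of_forall_continuous_fwdDiff (C := K)
    (measurable_deriv f) (periodic_deriv_of_map_add_eq_map_add (k := 0) (by simpa using hp))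
    (fun x => norm_deriv_le_of_lipschitz hK) fun c => ?_⟩
  rw [← deriv_fwdDiff hdiff]
  exact (hd c).continuous_deriv le_rfl

/-- De Bruijn's difference property for the class of `C^n` functions. -/
theorem contDiff_of_forall_contDiff_fwdDiff {n : ℕ} (hf : Continuous f) (hp : Periodic f 1)
    (hd : ∀ c, ContDiff ℝ n (Δ_[c] f)) : ContDiff ℝ n f := by
  induction n generalizing f with
  | zero => exact contDiff_zero.2 hf
  | succ n ih =>
    have hf1 : ContDiff ℝ 1 f := contDiff_one_of_forall_contDiff_fwdDiff hf hp fun c =>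
      (hd c).of_le (by exact_mod_cast Nat.le_add_left 1 n)
    have hderiv : ContDiff ℝ n (deriv f) := by
      refine ih (hf1.continuous_deriv le_rfl)
        (periodic_deriv_of_map_add_eq_map_add (k := 0) (by simpa using hp)) fun c => ?_
      rw [← deriv_fwdDiff hf1.differentiable_one]
      exact (contDiff_succ_iff_deriv.1 (by exact_mod_cast hd c)).2.2
    exact_mod_cast contDiff_succ_iff_deriv.2 ⟨hf1.differentiable_one, by simp, hderiv⟩

end DifferenceProperty

section DiffeoLifts

theorem continuous_units (f : CircleDeg1Liftˣ) : Continuous f :=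
  (toOrderIso f).continuous

theorem strictMono_units (f : CircleDeg1Liftˣ) : StrictMono f :=
  (toOrderIso f).strictMono

/-- The lifts to `ℝ` of the orientation-preserving circle homeomorphisms that are of class `C^n`
together with their inverse. -/
def diffeoLifts (n : WithTop ℕ∞) : Subgroup CircleDeg1Liftˣ where
  carrier := {f | ContDiff ℝ n f ∧ ContDiff ℝ n ⇑f⁻¹}
  one_mem' := ⟨contDiff_id, by simpa using contDiff_id⟩
  mul_mem' {f g} hf hg := ⟨hf.1.comp hg.1, by rw [mul_inv_rev]; exact hg.2.comp hf.2⟩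
  inv_mem' {f} hf := ⟨hf.2, by rw [inv_inv]; exact hf.1⟩

variable {n : WithTop ℕ∞} {f : CircleDeg1Liftˣ}

theorem diffeoLifts_antitone : Antitone diffeoLifts :=
  fun _ _ hmn _ hf => ⟨hf.1.of_le hmn, hf.2.of_le hmn⟩

theorem translate_mem_diffeoLifts (c : ℝ) : translate (ofAdd c) ∈ diffeoLifts n :=
  ⟨contDiff_const.add contDiff_id, by
    rw [← map_inv, ← ofAdd_neg]; exact contDiff_const.add contDiff_id⟩

theorem deriv_pos_of_mem_diffeoLifts (hf : f ∈ diffeoLifts 1) (x : ℝ) : 0 < deriv f x := by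
  refine (strictMono_units f).monotone.deriv_nonneg.lt_of_ne' fun h0 => ?_
  have hinv : HasDerivAt (⇑f⁻¹ ∘ f) (deriv ⇑f⁻¹ (f x) * deriv f x) x :=
    (hf.2.differentiable_one _).hasDerivAt.comp x (hf.1.differentiable_one x).hasDerivAt
  have hid : ⇑f⁻¹ ∘ f = id := funext (units_inv_apply_apply f)
  rw [hid, h0, mul_zero] at hinv
  exact zero_ne_one (hinv.unique (hasDerivAt_id x))

theorem contDiff_log_deriv_of_mem_diffeoLifts (hf : f ∈ diffeoLifts (n + 1)) :
    ContDiff ℝ n fun x => Real.log (deriv f x) :=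
  (contDiff_succ_iff_deriv.1 hf.1).2.2.log fun x =>
    (deriv_pos_of_mem_diffeoLifts (diffeoLifts_antitone le_add_self hf) x).ne'

end DiffeoLifts

section TranslationFlow

/-- The one-parameter group of translations, read in the coordinate `ψ`. -/
def translationFlow (ψ : CircleDeg1Liftˣ) (c : ℝ) : CircleDeg1Liftˣ :=
  ψ * translate (ofAdd c) * ψ⁻¹

variable {ψ : CircleDeg1Liftˣ}

theorem translationFlow_apply (ψ : CircleDeg1Liftˣ) (c s : ℝ) :
    translationFlow ψ c (ψ s) = ψ (s + c) := by
  simp [translationFlow, add_comm]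

theorem translationFlow_add (ψ : CircleDeg1Liftˣ) (c d : ℝ) :
    translationFlow ψ (c + d) = translationFlow ψ c * translationFlow ψ d := by
  simp [translationFlow, ofAdd_add, mul_assoc]

theorem hasDerivAt_add_of_translationFlow (h : ∀ c, Differentiable ℝ (translationFlow ψ c))
    {s d : ℝ} (hd : HasDerivAt ψ d s) (c : ℝ) :
    HasDerivAt ψ (deriv (translationFlow ψ c) (ψ s) * d) (s + c) := by
  have hcomp : HasDerivAt (fun t => ψ (t + c)) (deriv (translationFlow ψ c) (ψ s) * d)
      (s + c - c) := by
    simpa only [comp_def, translationFlow_apply, add_sub_cancel_right] using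
      (h c (ψ s)).hasDerivAt.comp s hd
  simpa using hcomp.comp_sub_const (s + c) c

theorem differentiable_of_translationFlow (h : ∀ c, Differentiable ℝ (translationFlow ψ c)) :
    Differentiable ℝ ψ := by
  obtain ⟨s, hs⟩ := (strictMono_units ψ).monotone.ae_differentiableAt.exists
  intro t
  have ht := hasDerivAt_add_of_translationFlow h hs.hasDerivAt (t - s)
  rw [add_sub_cancel] at ht
  exact ht.differentiableAt

theorem deriv_add_of_translationFlow (h : ∀ c, Differentiable ℝ (translationFlow ψ c)) (s c : ℝ) :
    deriv ψ (s + c) = deriv (translationFlow ψ c) (ψ s) * deriv ψ s :=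
  (hasDerivAt_add_of_translationFlow h (differentiable_of_translationFlow h s).hasDerivAt c).deriv

theorem deriv_pos_of_translationFlow (h : ∀ c, Differentiable ℝ (translationFlow ψ c)) (s : ℝ) :
    0 < deriv ψ s := by
  refine (strictMono_units ψ).monotone.deriv_nonneg.lt_of_ne' fun h0 => ?_
  have hzero (t : ℝ) : deriv ψ t = 0 := by
    simpa [h0] using deriv_add_of_translationFlow h s (t - s)
  exact (strictMono_units ψ zero_lt_one).ne
    (is_const_of_deriv_eq_zero (differentiable_of_translationFlow h) hzero 0 1)

theorem exists_forall_lipschitzWith_translationFlow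
    (h : ∀ c, ContDiff ℝ 1 (translationFlow ψ c)) {K : Set ℝ} (hK : IsCompact K) :
    ∃ C, ∀ c ∈ K, LipschitzWith C (translationFlow ψ c) := by
  refine exists_forall_lipschitzWith_of_isCompact (f := fun c => ⇑(translationFlow ψ c)) hK
    (fun x => ?_) (fun c => ?_) (fun C => ⟨C * C, fun c d hc hd => ?_⟩)
  · rw [← units_apply_inv_apply ψ x]
    simp only [translationFlow_apply]
    exact (continuous_units ψ).comp (by fun_prop)
  · exact exists_lipschitzWith_of_periodic_deriv (h c)
      (periodic_deriv_of_map_add_eq_map_add (map_add_one _)) one_ne_zero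
  · rw [translationFlow_add]
    exact hc.comp hd

theorem fwdDiff_log_deriv_of_translationFlow (h : ∀ c, Differentiable ℝ (translationFlow ψ c))
    (c : ℝ) : Δ_[c] (fun s => Real.log (deriv ψ s)) =
      fun s => Real.log (deriv (translationFlow ψ c) (ψ s)) := by
  funext s
  have hne := (deriv_pos_of_translationFlow h s).ne'
  rw [fwdDiff, ← Real.log_div (deriv_pos_of_translationFlow h _).ne' hne,
    deriv_add_of_translationFlow h, mul_div_cancel_right₀ _ hne]

theorem exists_abs_log_deriv_le_of_translationFlow (h : ∀ c, ContDiff ℝ 1 (translationFlow ψ c)) :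
    ∃ C, ∀ s, |Real.log (deriv ψ s)| ≤ C := by
  have hdiff (c : ℝ) := (h c).differentiable_one
  obtain ⟨N, hN⟩ := exists_forall_lipschitzWith_translationFlow h (isCompact_Icc (a := (0 : ℝ)))
  set u : ℝ → ℝ := fun s => Real.log (deriv ψ s)
  have hu : Periodic u 1 :=
    (periodic_deriv_of_map_add_eq_map_add (map_add_one (ψ : CircleDeg1Lift))).comp Real.log
  have hstep (s c : ℝ) (hc : c ∈ Icc 0 1) : u (s + c) - u s ≤ Real.log N := by
    have hpos : 0 < deriv (translationFlow ψ c) (ψ s) := by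
      refine pos_of_mul_pos_left ?_ (deriv_pos_of_translationFlow hdiff s).le
      exact deriv_add_of_translationFlow hdiff s c ▸ deriv_pos_of_translationFlow hdiff (s + c)
    calc u (s + c) - u s = Real.log (deriv (translationFlow ψ c) (ψ s)) :=
          congrFun (fwdDiff_log_deriv_of_translationFlow hdiff c) s
      _ ≤ Real.log N := Real.log_le_log hpos
          ((le_abs_self _).trans (norm_deriv_le_of_lipschitz (hN c hc)))
  refine ⟨|u 0| + Real.log N, fun s => ?_⟩
  obtain ⟨t, ht, hst⟩ := hu.exists_mem_Ico₀ one_pos s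
  have hup := hstep 0 t (Ico_subset_Icc_self ht)
  have hdown := hstep t (1 - t) ⟨by linarith [ht.2], by linarith [ht.1]⟩
  rw [zero_add] at hup
  rw [add_sub_cancel, ← zero_add (1 : ℝ), hu 0] at hdown
  change |u s| ≤ _
  rw [hst, abs_le]
  constructor <;> linarith [neg_abs_le (u 0), le_abs_self (u 0)]

theorem continuous_log_deriv_of_translationFlow (h : ∀ c, translationFlow ψ c ∈ diffeoLifts 1) :
    Continuous fun s => Real.log (deriv ψ s) := by
  obtain ⟨C, hC⟩ := exists_abs_log_deriv_le_of_translationFlow fun c => (h c).1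
  refine continuous_of_forall_continuous_fwdDiff
    (Real.measurable_log.comp (measurable_deriv ψ)) (((periodic_deriv_of_map_add_eq_map_add
      (map_add_one (ψ : CircleDeg1Lift))).comp Real.log)) hC fun c => ?_
  rw [fwdDiff_log_deriv_of_translationFlow fun c => (h c).1.differentiable_one]
  exact (contDiff_log_deriv_of_mem_diffeoLifts (n := 0) (by simpa using h c)).continuous.comp
    (continuous_units ψ)

theorem contDiff_of_translationFlow {n : ℕ} (h : ∀ c, translationFlow ψ c ∈ diffeoLifts n) :
    ContDiff ℝ n ψ := by
  induction n with
  | zero => exact contDiff_zero.2 (continuous_units ψ)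
  | succ n ih =>
    have h1 (c : ℝ) : translationFlow ψ c ∈ diffeoLifts 1 :=
      diffeoLifts_antitone (by exact_mod_cast Nat.le_add_left 1 n) (h c)
    have hdiff (c : ℝ) := (h1 c).1.differentiable_one
    have hψ : ContDiff ℝ n ψ := ih fun c =>
      diffeoLifts_antitone (by exact_mod_cast Nat.le_succ n) (h c)
    have hlog : ContDiff ℝ n fun s => Real.log (deriv ψ s) := by
      refine contDiff_of_forall_contDiff_fwdDiff (continuous_log_deriv_of_translationFlow h1)
        ((periodic_deriv_of_map_add_eq_map_add (map_add_one (ψ : CircleDeg1Lift))).comp Real.log)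
        fun c => ?_
      rw [fwdDiff_log_deriv_of_translationFlow hdiff]
      exact (contDiff_log_deriv_of_mem_diffeoLifts (by exact_mod_cast h c)).comp hψ
    have hderiv : deriv ψ = fun s => Real.exp (Real.log (deriv ψ s)) := by
      funext s
      rw [Real.exp_log (deriv_pos_of_translationFlow hdiff s)]
    rw [Nat.cast_succ, contDiff_succ_iff_deriv, hderiv]
    exact ⟨differentiable_of_translationFlow hdiff, by simp, hlog.exp⟩

theorem contDiff_inv_of_contDiff {n : WithTop ℕ∞} {f : CircleDeg1Liftˣ} (hf : Differentiable ℝ f)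
    (hne : ∀ x, deriv f x ≠ 0) (hn : ContDiff ℝ n f) : ContDiff ℝ n ⇑f⁻¹ :=
  (toOrderIso f).toHomeomorph.contDiff_symm_deriv hne (fun x => (hf x).hasDerivAt) hn

theorem mem_diffeoLifts_of_translationFlow {n : ℕ∞} (h : ∀ c, translationFlow ψ c ∈ diffeoLifts n) :
    ψ ∈ diffeoLifts n := by
  have hψ : ContDiff ℝ n ψ := contDiff_iff_forall_nat_le.2 fun m hm =>
    contDiff_of_translationFlow fun c => diffeoLifts_antitone (by exact_mod_cast hm) (h c)
  rcases eq_or_ne n 0 with rfl | hn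
  · exact ⟨hψ, contDiff_zero.2 (continuous_units ψ⁻¹)⟩
  · have hdiff (c : ℝ) : Differentiable ℝ (translationFlow ψ c) :=
      (h c).1.differentiable (by exact_mod_cast hn)
    exact ⟨hψ, contDiff_inv_of_contDiff (differentiable_of_translationFlow hdiff)
      (fun s => (deriv_pos_of_translationFlow hdiff s).ne') hψ⟩

end TranslationFlow

section Semiconj

variable {φ : CircleDeg1Lift} {H : CircleDeg1Liftˣ} {α : ℝ}

theorem map_apply_of_semiconjBy_translate {f : CircleDeg1Lift}
    (hφ : SemiconjBy φ f (translate (ofAdd α))) (x : ℝ) : φ (f x) = φ x + α := by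
  simpa [add_comm] using semiconjBy_iff_semiconj.1 hφ x

theorem map_zpow_of_semiconjBy_translate (hφ : SemiconjBy φ H (translate (ofAdd α))) (n : ℤ)
    (x : ℝ) : φ ((H ^ n) x) = φ x + n * α :=
  map_apply_of_semiconjBy_translate (translate_zpow α n ▸ hφ.units_zpow_right n) x

theorem map_pow_of_semiconjBy_translate (hφ : SemiconjBy φ H (translate (ofAdd α))) (n : ℕ)
    (x : ℝ) : φ ((H ^ n) x) = φ x + n * α := by
  simpa only [zpow_natCast, Int.cast_natCast] using map_zpow_of_semiconjBy_translate hφ n x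

theorem map_eq_left_of_mem_Icc {a b x : ℝ} (hab : φ a = φ b) (hx : x ∈ Icc a b) : φ x = φ a :=
  le_antisymm ((φ.monotone hx.2).trans_eq hab.symm) (φ.monotone hx.1)

theorem abs_sub_lt_one_of_abs_map_sub_map_lt_one (f : CircleDeg1Lift) {x y : ℝ}
    (h : |f x - f y| < 1) : |x - y| < 1 := by
  have hlt {x y : ℝ} (h : |f x - f y| < 1) : x < y + 1 := by
    by_contra! hyx
    have := f.monotone hyx
    rw [f.map_add_one] at this
    linarith [le_abs_self (f x - f y)]
  rw [abs_lt]
  constructor <;> linarith [hlt h, hlt (abs_sub_comm (f x) (f y) ▸ h)]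

end Semiconj

section WanderingIntervals

variable {φ : CircleDeg1Lift} {H : CircleDeg1Liftˣ} {α a b : ℝ}

theorem injective_fract_natCast_mul (hα : Irrational α) :
    Injective fun n : ℕ => Int.fract (n * α) := by
  intro m n hmn
  obtain ⟨z, hz⟩ := Int.fract_eq_fract.1 hmn
  by_contra hne
  refine (hα.intCast_mul (m := m - n) (by omega)).ne_int z ?_
  rw [← hz]
  push_cast
  ring

theorem map_eq_add_fract_of_mem_Icc (hφ : SemiconjBy φ H (translate (ofAdd α))) (he : φ a = φ b)
    {n : ℕ} {x : ℝ} (hx : x ∈ Icc ((H ^ n) a - ⌊n * α⌋) ((H ^ n) b - ⌊n * α⌋)) :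
    φ x = φ a + Int.fract (n * α) := by
  have hends (c : ℝ) : φ ((H ^ n) c - ⌊n * α⌋) = φ c + Int.fract (n * α) := by
    rw [φ.map_sub_int, map_pow_of_semiconjBy_translate hφ, add_sub_assoc, Int.self_sub_floor]
  rw [map_eq_left_of_mem_Icc (by rw [hends, hends, he]) hx, hends]

/-- The images of a plateau of `φ` under the powers of `H` are pairwise disjoint modulo `1`. -/
theorem sum_pow_sub_pow_le_two (hα : Irrational α) (hφ : SemiconjBy φ H (translate (ofAdd α)))
    (hab : a ≤ b) (he : φ a = φ b) (N : ℕ) :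
    ∑ n ∈ Finset.range N, ((H ^ n) b - (H ^ n) a) ≤ 2 := by
  set S : ℕ → Set ℝ := fun n => Icc ((H ^ n) a - ⌊n * α⌋) ((H ^ n) b - ⌊n * α⌋)
  have hS {n : ℕ} {x : ℝ} (hx : x ∈ S n) : φ x = φ a + Int.fract (n * α) :=
    map_eq_add_fract_of_mem_Icc hφ he hx
  have hsub : ⋃ n ∈ Finset.range N, S n ⊆ Icc (a - 1) (a + 1) := by
    refine iUnion₂_subset fun n _ x hx => ?_
    have hlt : |x - a| < 1 := abs_sub_lt_one_of_abs_map_sub_map_lt_one φ <| by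
      rw [hS hx, add_sub_cancel_left, Int.abs_fract]
      exact Int.fract_lt_one _
    constructor <;> linarith [(abs_lt.1 hlt).1, (abs_lt.1 hlt).2]
  have hdisj : (Finset.range N : Set ℕ).PairwiseDisjoint S := fun m _ n _ hmn =>
    disjoint_left.2 fun x hm hn => hmn <| injective_fract_natCast_mul hα <|
      add_left_cancel ((hS hm).symm.trans (hS hn))
  have hvol (n : ℕ) : volume (S n) = ENNReal.ofReal ((H ^ n) b - (H ^ n) a) := by
    rw [Real.volume_Icc, sub_sub_sub_cancel_right]
  have hle := measure_mono (μ := volume) hsub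
  rw [measure_biUnion_finset hdisj fun n _ => measurableSet_Icc, Real.volume_Icc,
    Finset.sum_congr rfl fun n _ => hvol n, ← ENNReal.ofReal_sum_of_nonneg fun n _ =>
      sub_nonneg.2 ((strictMono_units (H ^ n)).monotone hab),
    ENNReal.ofReal_le_ofReal_iff (by linarith)] at hle
  linarith

end WanderingIntervals

section Distortion

theorem deriv_mul_units {f g : CircleDeg1Liftˣ} (hf : Differentiable ℝ f)
    (hg : Differentiable ℝ g) (x : ℝ) : deriv (f * g : CircleDeg1Liftˣ) x =
      deriv f (g x) * deriv g x :=
  deriv_comp x (hf (g x)) (hg x)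

theorem log_deriv_mul_units {f g : CircleDeg1Liftˣ} (hf : f ∈ diffeoLifts 1)
    (hg : g ∈ diffeoLifts 1) (x : ℝ) : Real.log (deriv (f * g : CircleDeg1Liftˣ) x) =
      Real.log (deriv f (g x)) + Real.log (deriv g x) := by
  rw [deriv_mul_units hf.1.differentiable_one hg.1.differentiable_one,
    Real.log_mul (deriv_pos_of_mem_diffeoLifts hf _).ne' (deriv_pos_of_mem_diffeoLifts hg _).ne']

variable {H : CircleDeg1Liftˣ}

theorem log_deriv_pow (hH : H ∈ diffeoLifts 1) (n : ℕ) (x : ℝ) :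
    Real.log (deriv (H ^ n : CircleDeg1Liftˣ) x) =
      ∑ i ∈ Finset.range n, Real.log (deriv H ((H ^ i) x)) := by
  induction n with
  | zero => simp
  | succ n ih =>
    rw [pow_succ', log_deriv_mul_units hH (pow_mem hH n), ih, Finset.sum_range_succ, add_comm]

theorem abs_log_deriv_pow_sub_le {L : ℝ≥0} (hH : H ∈ diffeoLifts 1)
    (hL : LipschitzWith L fun x => Real.log (deriv H x)) (n : ℕ) (x y : ℝ) :
    |Real.log (deriv (H ^ n : CircleDeg1Liftˣ) x) - Real.log (deriv (H ^ n : CircleDeg1Liftˣ) y)|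
      ≤ L * ∑ i ∈ Finset.range n, |(H ^ i) x - (H ^ i) y| := by
  rw [log_deriv_pow hH, log_deriv_pow hH, ← Finset.sum_sub_distrib, Finset.mul_sum]
  exact (Finset.abs_sum_le_sum_abs _ _).trans (Finset.sum_le_sum fun i _ => hL.dist_le_mul _ _)

theorem exists_lipschitzWith_log_deriv (hH : H ∈ diffeoLifts 2) :
    ∃ L, LipschitzWith L fun x => Real.log (deriv H x) := by
  have hper : Periodic (fun x => Real.log (deriv H x)) 1 :=
    (periodic_deriv_of_map_add_eq_map_add (map_add_one (H : CircleDeg1Lift))).comp Real.log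
  exact exists_lipschitzWith_of_periodic_deriv
    (contDiff_log_deriv_of_mem_diffeoLifts (by rwa [one_add_one_eq_two]))
    (periodic_deriv_of_map_add_eq_map_add (k := 0) (by simpa using! hper)) one_ne_zero

theorem tendsto_deriv_of_fixedPoints {f : ℝ → ℝ} (hf : Differentiable ℝ f)
    (huc : UniformContinuous (deriv f)) {a b x : ℕ → ℝ} (hab : ∀ n, a n < b n)
    (ha : ∀ n, f (a n) = a n) (hb : ∀ n, f (b n) = b n) (hx : ∀ n, x n ∈ Icc (a n) (b n))
    (hlim : Tendsto (fun n => b n - a n) atTop (𝓝 0)) :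
    Tendsto (fun n => deriv f (x n)) atTop (𝓝 1) := by
  choose ξ hξ hξ' using fun n =>
    exists_deriv_eq_slope f (hab n) hf.continuous.continuousOn hf.differentiableOn
  have hdist : Tendsto (fun n => dist (x n) (ξ n)) atTop (𝓝 0) :=
    squeeze_zero (fun _ => dist_nonneg)
      (fun n => Real.dist_le_of_mem_Icc (hx n) (Ioo_subset_Icc_self (hξ n))) hlim
  have hderiv (n : ℕ) : deriv f (ξ n) = 1 := by
    rw [hξ', ha, hb, div_self (sub_pos.2 (hab n)).ne']
  have hunif : Tendsto (fun n => (deriv f (x n), deriv f (ξ n))) atTop (uniformity ℝ) :=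
    Tendsto.comp huc <|
      tendsto_uniformity_iff_dist_tendsto_zero (f := fun n => (x n, ξ n)) |>.2 hdist
  rw [tendsto_iff_dist_tendsto_zero]
  simpa only [hderiv] using tendsto_uniformity_iff_dist_tendsto_zero.1 hunif

end Distortion

section Kopell

variable {φ : CircleDeg1Lift} {G H : CircleDeg1Liftˣ} {α a b x : ℝ}

theorem tendsto_pow_sub_pow_zero (hα : Irrational α) (hφ : SemiconjBy φ H (translate (ofAdd α)))
    (hab : a ≤ b) (he : φ a = φ b) : Tendsto (fun n => (H ^ n) b - (H ^ n) a) atTop (𝓝 0) :=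
  (summable_of_sum_range_le (fun n => sub_nonneg.2 ((strictMono_units (H ^ n)).monotone hab))
    (sum_pow_sub_pow_le_two hα hφ hab he)).tendsto_atTop_zero

theorem neg_le_log_deriv_of_commute {L : ℝ≥0} (hH : H ∈ diffeoLifts 1)
    (hL : LipschitzWith L fun x => Real.log (deriv H x)) (hα : Irrational α)
    (hφ : SemiconjBy φ H (translate (ofAdd α))) (hG : G ∈ diffeoLifts 1) (hcomm : Commute G H)
    (hab : a < b) (he : φ a = φ b) (ha : G a = a) (hb : G b = b) (hx : x ∈ Icc a b) :
    -(L * 2) ≤ Real.log (deriv G x) := by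
  have hmono (n : ℕ) := (strictMono_units (H ^ n)).monotone
  have hcn (n : ℕ) : G * H ^ n = H ^ n * G := hcomm.pow_right n
  have hfix (n : ℕ) {c : ℝ} (hc : G c = c) : G ((H ^ n) c) = (H ^ n) c := by
    conv_rhs => rw [← hc]
    exact congrArg (fun f : CircleDeg1Liftˣ => f c) (hcn n)
  have hGx : G x ∈ Icc a b := by
    rw [← ha, ← hb]
    exact (strictMono_units G).monotone.mapsTo_Icc hx
  have hlim : Tendsto (fun n => Real.log (deriv G ((H ^ n) x))) atTop (𝓝 0) := by
    rw [← Real.log_one]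
    exact (tendsto_deriv_of_fixedPoints hG.1.differentiable_one
      (uniformContinuous_of_periodic (periodic_deriv_of_map_add_eq_map_add (map_add_one _))
        (hG.1.continuous_deriv le_rfl))
      (fun n => strictMono_units (H ^ n) hab) (fun n => hfix n ha) (fun n => hfix n hb)
      (fun n => (hmono n).mapsTo_Icc hx)
      (tendsto_pow_sub_pow_zero hα hφ hab.le he)).log one_ne_zero
  have hbound (n : ℕ) : Real.log (deriv G ((H ^ n) x)) - L * 2 ≤ Real.log (deriv G x) := by
    have hchain : Real.log (deriv G ((H ^ n) x)) + Real.log (deriv (H ^ n : CircleDeg1Liftˣ) x) =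
        Real.log (deriv (H ^ n : CircleDeg1Liftˣ) (G x)) + Real.log (deriv G x) := by
      rw [← log_deriv_mul_units hG (pow_mem hH n), hcn, log_deriv_mul_units (pow_mem hH n) hG]
    have hdist : ∑ i ∈ Finset.range n, |(H ^ i) (G x) - (H ^ i) x| ≤ 2 :=
      (Finset.sum_le_sum fun i _ => Real.dist_le_of_mem_Icc ((hmono i).mapsTo_Icc hGx)
        ((hmono i).mapsTo_Icc hx)).trans (sum_pow_sub_pow_le_two hα hφ hab.le he n)
    linarith [(le_abs_self _).trans (abs_log_deriv_pow_sub_le hH hL n (G x) x),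
      mul_le_mul_of_nonneg_left hdist L.coe_nonneg]
  simpa using le_of_tendsto' (hlim.sub_const (L * 2 : ℝ)) hbound

theorem exists_tendsto_iterate_of_monotone {f : ℝ → ℝ} (hf : Monotone f) (ha : f a = a)
    (hb : f b = b) (hx : x ∈ Icc a b) : ∃ l, Tendsto (fun n => f^[n] x) atTop (𝓝 l) := by
  have horbit (n : ℕ) : f^[n] x ∈ Icc a b := by
    simpa only [iterate_fixed ha, iterate_fixed hb] using (hf.iterate n).mapsTo_Icc hx
  rcases le_total x (f x) with h | h
  · exact ⟨_, tendsto_atTop_ciSup (hf.monotone_iterate_of_le_map h)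
      ⟨b, forall_mem_range.2 fun n => (horbit n).2⟩⟩
  · exact ⟨_, tendsto_atTop_ciInf (hf.antitone_iterate_of_map_le h)
      ⟨a, forall_mem_range.2 fun n => (horbit n).1⟩⟩

theorem isFixedPt_of_forall_le_deriv_iterate {f : ℝ → ℝ} {δ : ℝ} (hf : Monotone f)
    (hdiff : Differentiable ℝ f) (ha : f a = a) (hb : f b = b) (hδ : 0 < δ)
    (hderiv : ∀ n, ∀ y ∈ Icc a b, δ ≤ deriv f^[n] y) (hx : x ∈ Icc a b) :
    IsFixedPt f x := by
  have hfx : f x ∈ Icc a b := by simpa only [ha, hb] using hf.mapsTo_Icc hx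
  have hexpand (n : ℕ) : δ * |f x - x| ≤ |f^[n + 1] x - f^[n] x| := by
    have hmv {y z : ℝ} (hy : y ∈ Icc a b) (hz : z ∈ Icc a b) (hyz : y ≤ z) :
        δ * |z - y| ≤ |f^[n] z - f^[n] y| := by
      rw [abs_of_nonneg (sub_nonneg.2 hyz), abs_of_nonneg (sub_nonneg.2 (hf.iterate n hyz))]
      exact (convex_Icc a b).mul_sub_le_image_sub_of_le_deriv
        (hdiff.iterate n).continuous.continuousOn (hdiff.iterate n).differentiableOn
        (fun w hw => hderiv n w (interior_subset hw)) y hy z hz hyz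
    rw [iterate_succ_apply]
    rcases le_total x (f x) with h | h
    · exact hmv hx hfx h
    · simpa only [abs_sub_comm] using hmv hfx hx h
  obtain ⟨l, hl⟩ := exists_tendsto_iterate_of_monotone hf ha hb hx
  have hzero : δ * |f x - x| ≤ 0 := by
    simpa using ge_of_tendsto' ((hl.comp (tendsto_add_atTop_nat 1)).sub hl).abs hexpand
  exact sub_eq_zero.1 (abs_nonpos_iff.1 (nonpos_of_mul_nonpos_right hzero hδ))

theorem isFixedPt_of_commute (hH : H ∈ diffeoLifts 2) (hα : Irrational α)
    (hφ : SemiconjBy φ H (translate (ofAdd α))) (hG : G ∈ diffeoLifts 1) (hcomm : Commute G H)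
    (he : φ a = φ b) (ha : G a = a) (hb : G b = b) (hx : x ∈ Icc a b) :
    IsFixedPt G x := by
  rcases (hx.1.trans hx.2).eq_or_lt with rfl | hab
  · rwa [le_antisymm hx.2 hx.1]
  obtain ⟨L, hL⟩ := exists_lipschitzWith_log_deriv hH
  have hcoe (n : ℕ) : ⇑(G ^ n) = G^[n] := by rw [Units.val_pow_eq_pow_val, coe_pow]
  refine isFixedPt_of_forall_le_deriv_iterate (strictMono_units G).monotone
    hG.1.differentiable_one ha hb (Real.exp_pos (-(L * 2))) (fun n y hy => ?_) hx
  rw [← hcoe, ← Real.le_log_iff_exp_le (deriv_pos_of_mem_diffeoLifts (pow_mem hG n) y)]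
  exact neg_le_log_deriv_of_commute (diffeoLifts_antitone (by norm_num) hH) hL hα hφ
    (pow_mem hG n) (hcomm.pow_left n) hab he (by rw [hcoe, iterate_fixed ha])
    (by rw [hcoe, iterate_fixed hb]) hy

theorem exists_isLeast_isGreatest_fiber (hφ : Continuous φ) (x : ℝ) :
    ∃ a b, IsLeast (φ ⁻¹' {φ x}) a ∧ IsGreatest (φ ⁻¹' {φ x}) b := by
  have hsub : φ ⁻¹' {φ x} ⊆ Icc (x - 1) (x + 1) := fun y (hy : φ y = φ x) => by
    have hlt := abs_lt.1 <|
      abs_sub_lt_one_of_abs_map_sub_map_lt_one φ (x := y) (y := x) (by simp [hy])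
    constructor <;> linarith [hlt.1, hlt.2]
  have hcompact : IsCompact (φ ⁻¹' {φ x}) :=
    isCompact_Icc.of_isClosed_subset (isClosed_singleton.preimage hφ) hsub
  obtain ⟨a, ha⟩ := hcompact.exists_isLeast ⟨x, rfl⟩
  obtain ⟨b, hb⟩ := hcompact.exists_isGreatest ⟨x, rfl⟩
  exact ⟨a, b, ha, hb⟩

theorem eq_one_of_commute_of_forall_map_eq (hH : H ∈ diffeoLifts 2) (hα : Irrational α)
    (hφc : Continuous φ) (hφ : SemiconjBy φ H (translate (ofAdd α))) (hG : G ∈ diffeoLifts 1)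
    (hcomm : Commute G H) (hφG : ∀ x, φ (G x) = φ x) : G = 1 := by
  refine Units.ext (CircleDeg1Lift.ext fun x => ?_)
  obtain ⟨a, b, ha, hb⟩ := exists_isLeast_isGreatest_fiber hφc x
  have hfiber : G '' (φ ⁻¹' {φ x}) = φ ⁻¹' {φ x} := by
    have hpre : G ⁻¹' (φ ⁻¹' {φ x}) = φ ⁻¹' {φ x} := by
      ext y
      simp only [mem_preimage, hφG]
    conv_lhs => rw [← hpre]
    exact image_preimage_eq _ (toOrderIso G).surjective
  have hmono := (strictMono_units G).monotone
  exact isFixedPt_of_commute hH hα hφ hG hcomm (ha.1.trans (Eq.symm hb.1))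
    ((hfiber ▸ hmono.map_isLeast ha).unique ha) ((hfiber ▸ hmono.map_isGreatest hb).unique hb)
    ⟨ha.2 rfl, hb.2 rfl⟩

end Kopell

section RotationNumber

variable {φ ψ : CircleDeg1Lift} {F G H : CircleDeg1Liftˣ} {α : ℝ}

theorem exists_map_eq_map_zero_add (hφ : SemiconjBy φ H (translate (ofAdd α)))
    (hψ : SemiconjBy ψ H (translate (ofAdd α))) {d : ℝ}
    (hd : d ∈ AddSubgroup.closure ({α, 1} : Set ℝ)) :
    ∃ x, φ x = φ 0 + d ∧ ψ x = ψ 0 + d := by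
  obtain ⟨m, k, rfl⟩ := AddSubgroup.mem_closure_pair.1 hd
  exact ⟨(H ^ m) 0 + k, by simp [map_zpow_of_semiconjBy_translate hφ, add_assoc],
    by simp [map_zpow_of_semiconjBy_translate hψ, add_assoc]⟩

theorem dense_closure_pair_one (hα : Irrational α) :
    Dense (AddSubgroup.closure ({α, 1} : Set ℝ) : Set ℝ) :=
  dense_addSubgroupClosure_pair_iff.2 (by simpa using hα)

theorem continuous_of_semiconjBy_translate (hα : Irrational α)
    (hφ : SemiconjBy φ H (translate (ofAdd α))) : Continuous φ := by
  refine φ.monotone.continuous_of_denseRange ?_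
  refine ((Homeomorph.addLeft (φ 0)).surjective.denseRange.dense_image
    (Homeomorph.addLeft (φ 0)).continuous (dense_closure_pair_one hα)).mono ?_
  rintro _ ⟨d, hd, rfl⟩
  obtain ⟨x, hx, -⟩ := exists_map_eq_map_zero_add hφ hφ hd
  exact ⟨x, hx⟩

theorem map_sub_map_zero_eq_of_semiconjBy_translate (hα : Irrational α)
    (hφ : SemiconjBy φ H (translate (ofAdd α))) (hψ : SemiconjBy ψ H (translate (ofAdd α)))
    (x : ℝ) : φ x - φ 0 = ψ x - ψ 0 := by
  have hle {φ ψ : CircleDeg1Lift} (hφ : SemiconjBy φ H (translate (ofAdd α)))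
      (hψ : SemiconjBy ψ H (translate (ofAdd α))) : φ x - φ 0 ≤ ψ x - ψ 0 := by
    by_contra! hlt
    obtain ⟨d, hd, hψd, hdφ⟩ := (dense_closure_pair_one hα).exists_between hlt
    obtain ⟨y, hφy, hψy⟩ := exists_map_eq_map_zero_add hφ hψ hd
    rcases le_total x y with hxy | hyx
    · linarith [φ.monotone hxy]
    · linarith [ψ.monotone hyx]
  exact le_antisymm (hle hφ hψ) (hle hψ hφ)

theorem translationNumber_eq_of_semiconjBy_translate {f : CircleDeg1Lift}
    (hφ : SemiconjBy φ f (translate (ofAdd α))) : translationNumber f = α := by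
  rw [translationNumber_eq_of_semiconjBy hφ, translationNumber_translate]

theorem exists_semiconjBy_translate (H : CircleDeg1Liftˣ) :
    ∃ φ : CircleDeg1Lift, SemiconjBy φ H (translate (ofAdd (translationNumber H))) := by
  obtain ⟨φ, hφ⟩ :=
    units_semiconj_of_translationNumber_eq (translationNumber_translate (translationNumber H)).symm
  exact ⟨φ, semiconjBy_iff_semiconj.2 hφ⟩

theorem semiconjBy_translate_of_commute (hα : Irrational α)
    (hφ : SemiconjBy φ H (translate (ofAdd α))) (hG : Commute G H) :
    SemiconjBy φ G (translate (ofAdd (translationNumber G))) := by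
  have hφG : SemiconjBy (φ * G) H (translate (ofAdd α)) :=
    hφ.mul_left (congrArg Units.val hG)
  have hsemi : SemiconjBy φ G (translate (ofAdd (φ (G 0) - φ 0))) :=
    semiconjBy_iff_semiconj.2 fun x => by
      have := map_sub_map_zero_eq_of_semiconjBy_translate hα hφG hφ x
      simp only [mul_apply] at this
      rw [translate_apply]
      linarith
  rwa [translationNumber_eq_of_semiconjBy_translate hsemi]

theorem translationNumber_mul_of_commute_of_irrational (hH : Irrational (translationNumber H))
    (hF : Commute F H) (hG : Commute G H) :
    translationNumber (F * G : CircleDeg1Lift) = translationNumber F + translationNumber G := by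
  obtain ⟨φ, hφ⟩ := exists_semiconjBy_translate H
  refine translationNumber_eq_of_semiconjBy_translate (φ := φ) ?_
  rw [ofAdd_add, map_mul]
  exact (semiconjBy_translate_of_commute hH hφ hF).mul_right
    (semiconjBy_translate_of_commute hH hφ hG)

/-- Kopell's lemma for diffeomorphisms with irrational rotation number. -/
theorem eq_one_of_commute_of_translationNumber_eq_zero (hH : H ∈ diffeoLifts 2)
    (hα : Irrational (translationNumber H)) (hG : G ∈ diffeoLifts 1) (hcomm : Commute G H)
    (hτ : translationNumber G = 0) : G = 1 := by
  obtain ⟨φ, hφ⟩ := exists_semiconjBy_translate H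
  refine eq_one_of_commute_of_forall_map_eq hH hα (continuous_of_semiconjBy_translate hα hφ) hφ hG
    hcomm fun x => ?_
  simpa [hτ] using map_apply_of_semiconjBy_translate (semiconjBy_translate_of_commute hα hφ hcomm) x

end RotationNumber

section Circle

/-- The circle map covered by a degree-one lift. -/
def mapCircle (f : CircleDeg1Lift) : UnitAddCircle → UnitAddCircle :=
  Periodic.lift (f := fun x => (f x : UnitAddCircle)) (c := 1) fun x =>
    (congrArg _ (f.map_add_one x)).trans (AddCircle.coe_add_period 1 (f x))

theorem mapCircle_coe (f : CircleDeg1Lift) (x : ℝ) : mapCircle f x = (f x : ℝ) := rfl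

theorem continuous_mapCircle {f : CircleDeg1Lift} (hf : Continuous f) :
    Continuous (mapCircle f) :=
  (QuotientAddGroup.isQuotientMap_mk _).continuous_iff.2 ((AddCircle.continuous_mk' 1).comp hf)

/-- The circle homeomorphism covered by an invertible degree-one lift. -/
def circleHomeo : CircleDeg1Liftˣ →* (UnitAddCircle ≃ₜ UnitAddCircle) where
  toFun f :=
    { toFun := mapCircle f
      invFun := mapCircle (f⁻¹ : CircleDeg1Liftˣ)
      left_inv := QuotientAddGroup.mk_surjective.forall.2 fun x =>
        congrArg _ (units_inv_apply_apply f x)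
      right_inv := QuotientAddGroup.mk_surjective.forall.2 fun x =>
        congrArg _ (units_apply_inv_apply f x)
      continuous_toFun := continuous_mapCircle (continuous_units f)
      continuous_invFun := continuous_mapCircle (continuous_units f⁻¹) }
  map_one' := Homeomorph.ext <| QuotientAddGroup.mk_surjective.forall.2 fun _ => rfl
  map_mul' _ _ := Homeomorph.ext <| QuotientAddGroup.mk_surjective.forall.2 fun _ => rfl

theorem circleHomeo_coe (f : CircleDeg1Liftˣ) (x : ℝ) : circleHomeo f x = (f x : ℝ) := rfl

theorem exists_eq_add_intCast_of_coe_eq {x y : ℝ} (h : (x : UnitAddCircle) = y) :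
    ∃ k : ℤ, x = y + k := by
  obtain ⟨k, hk⟩ := AddSubgroup.mem_zmultiples_iff.1 (QuotientAddGroup.eq_iff_sub_mem.1 h)
  exact ⟨k, by rw [zsmul_one] at hk; linarith⟩

theorem exists_units_coe_eq {g : UnitAddCircle ≃ₜ UnitAddCircle} {G : ℝ → ℝ} (hG : Continuous G)
    (hdeg : ∀ x, G (x + 1) = G x + 1) (hcov : ∀ x : ℝ, (G x : UnitAddCircle) = g x) :
    ∃ f : CircleDeg1Liftˣ, ⇑f = G := by
  have hper : Periodic (fun x => G x - x) 1 := fun x => by simp only [hdeg]; ring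
  have hinj : Injective G := fun x y hxy => by
    obtain ⟨k, rfl⟩ := exists_eq_add_intCast_of_coe_eq <|
      g.injective <| (hcov x).symm.trans <| (congrArg _ hxy).trans (hcov y)
    have hk : G (y + k) - (y + k) = G y - y := by simpa using hper.int_mul k y
    linarith
  have hmono : StrictMono G := (hG.strictMono_of_inj hinj).resolve_right fun hanti => by
    linarith [hanti zero_lt_one, zero_add (1 : ℝ) ▸ hdeg 0]
  set f : CircleDeg1Lift := ⟨⟨G, hmono.monotone⟩, hdeg⟩
  have hf : IsUnit f := isUnit_iff_bijective.2 ⟨hinj, f.continuous_iff_surjective.1 hG⟩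
  exact ⟨hf.unit, rfl⟩

theorem exists_eq_translate_of_coe_eq {f : CircleDeg1Lift}
    (h : ∀ x : ℝ, (f x : UnitAddCircle) = x) : ∃ k : ℤ, f = translate (ofAdd (k : ℝ)) := by
  choose k hk using fun x => exists_eq_add_intCast_of_coe_eq (h x)
  refine ⟨k 0, CircleDeg1Lift.ext fun x => ?_⟩
  have hle : (k x : ℝ) < k 0 + 1 := by
    linarith [f.map_le_of_map_zero x, Int.ceil_lt_add_one x, hk x, hk 0]
  have hge : (k 0 : ℝ) < k x + 1 := by
    linarith [f.le_map_of_map_zero x, Int.lt_floor_add_one x, hk x, hk 0]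
  have hkx : k x = k 0 := by
    norm_cast at hle hge
    omega
  rw [hk, hkx, translate_apply, add_comm]

theorem exists_eq_translate_mul {f : CircleDeg1Lift} {g : CircleDeg1Liftˣ}
    (h : ∀ x : ℝ, (f x : UnitAddCircle) = circleHomeo g x) :
    ∃ k : ℤ, f = translate (ofAdd (k : ℝ)) * g := by
  obtain ⟨k, hk⟩ := exists_eq_translate_of_coe_eq (f := f * (g⁻¹ : CircleDeg1Liftˣ)) fun x => by
    rw [mul_apply, h, circleHomeo_coe, units_apply_inv_apply]
  exact ⟨k, by rw [← hk, Units.inv_mul_cancel_right]⟩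

theorem circleHomeo_translate_intCast (k : ℤ) : circleHomeo (translate (ofAdd (k : ℝ))) = 1 :=
  Homeomorph.ext <| QuotientAddGroup.mk_surjective.forall.2 fun x => by
    simp [circleHomeo_coe]

theorem commute_translate_intCast (k : ℤ) (f : CircleDeg1Lift) :
    Commute (translate (ofAdd (k : ℝ)) : CircleDeg1Lift) f :=
  CircleDeg1Lift.ext fun x => by simp

theorem commute_of_commute_circleHomeo {F G : CircleDeg1Liftˣ}
    (h : Commute (circleHomeo F) (circleHomeo G)) : Commute F G := by
  obtain ⟨k, hk⟩ := exists_eq_translate_mul (f := (F * G : CircleDeg1Liftˣ)) (g := G * F)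
    fun x => by rw [← circleHomeo_coe, map_mul, map_mul, h.eq]
  have hconj : translationNumber (F * G : CircleDeg1Liftˣ) =
      translationNumber (G * F : CircleDeg1Liftˣ) := by
    simpa [mul_assoc] using translationNumber_conj_eq F (G * F : CircleDeg1Liftˣ)
  have hk0 : (k : ℝ) = 0 := by
    rwa [hk, translationNumber_mul_of_commute (commute_translate_intCast k _),
      translationNumber_translate, add_eq_right] at hconj
  refine Units.ext ?_
  rw [hk, hk0, ofAdd_zero, map_one, Units.val_one, one_mul]

end Circle

section CircleDiffeos

/-- The orientation-preserving circle homeomorphisms that are of class `C^n` together with their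
inverse. -/
def circleDiffeos (n : WithTop ℕ∞) : Subgroup (UnitAddCircle ≃ₜ UnitAddCircle) :=
  (diffeoLifts n).map circleHomeo

theorem isSmoothCircleDiffeo_iff {g : UnitAddCircle ≃ₜ UnitAddCircle} :
    IsSmoothCircleDiffeo g ↔ g ∈ circleDiffeos ∞ := by
  constructor
  · rintro ⟨G, Ginv, hG, hGinv, hdeg, hdeg', hcov, hcov'⟩
    obtain ⟨f, rfl⟩ := exists_units_coe_eq hG.continuous hdeg hcov
    obtain ⟨f', rfl⟩ := exists_units_coe_eq hGinv.continuous hdeg' hcov'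
    have hfg : circleHomeo f = g := Homeomorph.ext <| QuotientAddGroup.mk_surjective.forall.2 hcov
    obtain ⟨k, hk⟩ := exists_eq_translate_mul (f := f') (g := f⁻¹) fun x => by
      rw [hcov', map_inv, hfg]
      rfl
    have hinv : ⇑f⁻¹ = fun x => f' x - k := by
      funext x
      rw [hk, mul_apply, translate_apply, add_sub_cancel_left]
    exact ⟨f, ⟨hG, hinv ▸ hGinv.sub contDiff_const⟩, hfg⟩
  · rintro ⟨f, ⟨hf, hf'⟩, rfl⟩
    exact ⟨f, ⇑f⁻¹, hf, hf', map_add_one _, map_add_one _, fun _ => rfl, fun _ => rfl⟩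

theorem exists_mem_diffeoLifts_circleHomeo_eq {n : WithTop ℕ∞} {h : UnitAddCircle ≃ₜ UnitAddCircle}
    (hh : h ∈ circleDiffeos n) {f : CircleDeg1Lift}
    (hf : ∀ x : ℝ, (f x : UnitAddCircle) = h x) :
    ∃ H ∈ diffeoLifts n, circleHomeo H = h ∧ (H : CircleDeg1Lift) = f := by
  obtain ⟨H, hH, rfl⟩ := hh
  obtain ⟨k, rfl⟩ := exists_eq_translate_mul hf
  exact ⟨translate (ofAdd (k : ℝ)) * H, mul_mem (translate_mem_diffeoLifts _) hH, by
    rw [map_mul, circleHomeo_translate_intCast, one_mul], rfl⟩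

end CircleDiffeos

section ConnectedSubsets

theorem eq_or_eq_neg_of_norm_eq {x y : UnitAddCircle} (h : ‖x‖ = ‖y‖) : x = y ∨ x = -y := by
  induction x using QuotientAddGroup.induction_on with | _ x
  induction y using QuotientAddGroup.induction_on with | _ y
  have hround (z : ℝ) : (z : UnitAddCircle) = (z - round z : ℝ) := by
    rw [AddCircle.coe_sub, ← zsmul_one (round z), AddCircle.coe_zsmul, AddCircle.coe_period,
      zsmul_zero, sub_zero]
  rw [UnitAddCircle.norm_eq, UnitAddCircle.norm_eq, abs_eq_abs] at h
  rw [hround x, hround y, ← AddCircle.coe_neg]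
  exact h.imp (congrArg _) (congrArg _)

theorem eq_top_of_isPreconnected {B : AddSubgroup UnitAddCircle} {S : Set UnitAddCircle}
    (hS : IsPreconnected S) (hnt : S.Nontrivial) (hSB : S ⊆ B) : B = ⊤ := by
  obtain ⟨s, hs, t, ht, hst⟩ := hnt
  have hball : Metric.closedBall 0 ‖t - s‖ ⊆ (B : Set UnitAddCircle) := fun z hz => by
    have hivt := hS.intermediate_value hs ht (f := fun u => ‖u - s‖) (by fun_prop)
    obtain ⟨u, hu, huz⟩ := hivt ⟨by simp, mem_closedBall_zero_iff.1 hz⟩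
    have huB : u - s ∈ B := sub_mem (hSB hu) (hSB hs)
    rcases eq_or_eq_neg_of_norm_eq huz.symm with rfl | rfl
    exacts [huB, neg_mem huB]
  have hopen : IsOpen (B : Set UnitAddCircle) := B.isOpen_of_mem_nhds <|
    mem_of_superset (Metric.closedBall_mem_nhds 0 (norm_pos_iff.2 (sub_ne_zero.2 hst.symm))) hball
  exact SetLike.coe_injective <|
    IsClopen.eq_univ ⟨B.isClosed_of_isOpen hopen, hopen⟩ ⟨0, B.zero_mem⟩

theorem eq_top_of_continuous_coe {X : Type*} [TopologicalSpace X] [PreconnectedSpace X]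
    {A : AddSubgroup ℝ} (h1 : 1 ∈ A) {c : X → ℝ} (hc : Continuous fun t => (c t : UnitAddCircle))
    (hA : ∀ t, c t ∈ A) {s t : X} (hst : (c s : UnitAddCircle) ≠ c t) : A = ⊤ := by
  have htop : A.map (QuotientAddGroup.mk' (AddSubgroup.zmultiples (1 : ℝ))) = ⊤ :=
    eq_top_of_isPreconnected (isPreconnected_range hc)
      ⟨_, mem_range_self s, _, mem_range_self t, hst⟩
      (range_subset_iff.2 fun t => ⟨c t, hA t, rfl⟩)
  refine (AddSubgroup.eq_top_iff' A).2 fun d => ?_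
  obtain ⟨a, ha, had⟩ := (AddSubgroup.eq_top_iff' _).1 htop d
  obtain ⟨k, rfl⟩ := exists_eq_add_intCast_of_coe_eq (Eq.symm had)
  exact add_mem ha (by simpa using zsmul_mem h1 k)

end ConnectedSubsets

section SemiconjTranslations

/-- The translation lengths `d` such that some element of `Γ` is semiconjugate by `φ` to
`x ↦ x + d`. -/
def semiconjTranslations (φ : CircleDeg1Lift) (Γ : Subgroup CircleDeg1Liftˣ) : AddSubgroup ℝ where
  carrier := {d | ∃ K ∈ Γ, SemiconjBy φ K (translate (ofAdd d))}
  zero_mem' := ⟨1, one_mem Γ, by simp⟩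
  add_mem' := by
    rintro c d ⟨K, hK, hφK⟩ ⟨L, hL, hφL⟩
    refine ⟨K * L, mul_mem hK hL, ?_⟩
    rw [ofAdd_add, map_mul]
    exact hφK.mul_right hφL
  neg_mem' := by
    rintro d ⟨K, hK, hφK⟩
    refine ⟨K⁻¹, inv_mem hK, ?_⟩
    rw [ofAdd_neg, map_inv]
    exact hφK.units_inv_right

variable {φ : CircleDeg1Lift} {Γ : Subgroup CircleDeg1Liftˣ}

theorem one_mem_semiconjTranslations (h : translate (ofAdd 1) ∈ Γ) :
    1 ∈ semiconjTranslations φ Γ :=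
  ⟨_, h, CircleDeg1Lift.ext fun x => by simp⟩

/-- Otherwise the images of a plateau would be uncountably many disjoint intervals. -/
theorem injective_of_semiconjTranslations_eq_top (h : semiconjTranslations φ Γ = ⊤) :
    Injective φ := by
  choose K _ hK using fun d => (AddSubgroup.eq_top_iff' _).1 h d
  refine .of_lt_imp_ne fun x y hxy he => Cardinal.not_countable_real ?_
  have hval {d z : ℝ} (hz : z ∈ Ioo (K d x) (K d y)) : φ z = φ x + d := by
    rw [← map_apply_of_semiconjBy_translate (hK d)]
    refine map_eq_left_of_mem_Icc ?_ (Ioo_subset_Icc_self hz)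
    rw [map_apply_of_semiconjBy_translate (hK d), map_apply_of_semiconjBy_translate (hK d), he]
  refine PairwiseDisjoint.countable_of_isOpen (s := fun d => Ioo (K d x) (K d y))
    (fun c _ d _ hcd => disjoint_left.2 fun z hc hd => hcd ?_) (fun d _ => isOpen_Ioo)
    fun d _ => nonempty_Ioo.2 (strictMono_units (K d) hxy)
  exact add_left_cancel ((hval hc).symm.trans (hval hd))

theorem isUnit_of_semiconjTranslations_eq_top (h : semiconjTranslations φ Γ = ⊤) : IsUnit φ := by
  refine isUnit_iff_bijective.2 ⟨injective_of_semiconjTranslations_eq_top h, fun y => ?_⟩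
  obtain ⟨K, -, hK⟩ := (AddSubgroup.eq_top_iff' _).1 h (y - φ 0)
  exact ⟨K 0, by rw [map_apply_of_semiconjBy_translate hK, add_sub_cancel]⟩

theorem mem_diffeoLifts_of_semiconjTranslations_eq_top {n : ℕ∞} {Φ : CircleDeg1Liftˣ}
    (h : semiconjTranslations Φ (diffeoLifts n) = ⊤) : Φ ∈ diffeoLifts n := by
  refine inv_mem_iff.1 (mem_diffeoLifts_of_translationFlow fun d => ?_)
  obtain ⟨K, hK, hΦK⟩ := (AddSubgroup.eq_top_iff' _).1 h d
  have heq : Φ * K = translate (ofAdd d) * Φ := Units.ext hΦK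
  rwa [translationFlow, inv_inv, mul_assoc, ← heq, inv_mul_cancel_left]

theorem exists_mem_circleDiffeos_conj_eq_add {n : ℕ∞} {H : CircleDeg1Liftˣ} {α : ℝ}
    (hφ : SemiconjBy φ H (translate (ofAdd α)))
    (h : semiconjTranslations φ (diffeoLifts n) = ⊤) :
    ∃ f ∈ circleDiffeos n, ∀ x, f (circleHomeo H (f.symm x)) = x + (α : UnitAddCircle) := by
  obtain ⟨Φ, rfl⟩ := isUnit_of_semiconjTranslations_eq_top h
  refine ⟨circleHomeo Φ, ⟨Φ, mem_diffeoLifts_of_semiconjTranslations_eq_top h, rfl⟩,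
    (circleHomeo Φ).surjective.forall.2 <| QuotientAddGroup.mk_surjective.forall.2 fun x => ?_⟩
  rw [Homeomorph.symm_apply_apply]
  exact congrArg _ (map_apply_of_semiconjBy_translate hφ x)

end SemiconjTranslations

section Centralizer

variable {F G H : CircleDeg1Liftˣ}

theorem coe_eq_sub_of_semiconjBy_translate {φ : CircleDeg1Lift} {d : ℝ}
    (hφ : SemiconjBy φ G (translate (ofAdd d))) (x : UnitAddCircle) :
    (d : UnitAddCircle) = mapCircle φ (circleHomeo G x) - mapCircle φ x := by
  induction x using QuotientAddGroup.induction_on with | _ x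
  rw [circleHomeo_coe, mapCircle_coe, mapCircle_coe, map_apply_of_semiconjBy_translate hφ,
    AddCircle.coe_add, add_sub_cancel_left]

theorem circleHomeo_eq_of_coe_translationNumber_eq (hH : H ∈ diffeoLifts 2)
    (hα : Irrational (translationNumber H)) (hF : F ∈ diffeoLifts 1) (hG : G ∈ diffeoLifts 1)
    (hFH : Commute F H) (hGH : Commute G H)
    (h : (translationNumber F : UnitAddCircle) = translationNumber G) :
    circleHomeo F = circleHomeo G := by
  obtain ⟨k, hk⟩ := exists_eq_add_intCast_of_coe_eq h
  have hT : Commute (translate (ofAdd (k : ℝ))) H := Units.ext (commute_translate_intCast k H)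
  have hTG : Commute (translate (ofAdd (k : ℝ)) * G) H := hT.mul_left hGH
  have hτ : translationNumber (F * (translate (ofAdd (k : ℝ)) * G)⁻¹ : CircleDeg1Liftˣ) = 0 := by
    rw [Units.val_mul, translationNumber_mul_of_commute_of_irrational hα hFH hTG.inv_left,
      translationNumber_units_inv, Units.val_mul,
      translationNumber_mul_of_commute_of_irrational hα hT hGH, translationNumber_translate, hk]
    ring
  have hone := eq_one_of_commute_of_translationNumber_eq_zero hH hα
    (mul_mem hF (inv_mem (mul_mem (translate_mem_diffeoLifts k) hG))) (hFH.mul_left hTG.inv_left) hτ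
  rw [mul_inv_eq_one.1 hone, map_mul, circleHomeo_translate_intCast, one_mul]

theorem stmt_8_general {X : Type*} [TopologicalSpace X] [PreconnectedSpace X] {n : ℕ∞}
    (hn : 2 ≤ (n : WithTop ℕ∞))
    {h : UnitAddCircle ≃ₜ UnitAddCircle} (hh : h ∈ circleDiffeos n)
    (hrot : ∃ f : CircleDeg1Lift, (∀ x : ℝ, ((f x : ℝ) : UnitAddCircle) = h x) ∧
      Irrational f.translationNumber)
    (hnl : ¬ ∃ φ ∈ circleDiffeos n, ∃ β : ℝ, ∀ x, φ (h (φ.symm x)) = x + (β : UnitAddCircle))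
    {γ : X → UnitAddCircle ≃ₜ UnitAddCircle} (hγ : ∀ t, γ t ∈ circleDiffeos n)
    (hcomm : ∀ t, Commute (γ t) h) {x₀ : UnitAddCircle} (hγc : Continuous fun t => γ t x₀)
    (s t : X) : γ s = γ t := by
  obtain ⟨_, hf, hα⟩ := hrot
  obtain ⟨H, hH, rfl, rfl⟩ := exists_mem_diffeoLifts_circleHomeo_eq hh hf
  obtain ⟨φ, hφ⟩ := exists_semiconjBy_translate H
  choose G hG hGγ using hγ
  obtain rfl : (fun t => circleHomeo (G t)) = γ := funext hGγ
  have hGH (t : X) : Commute (G t) H := commute_of_commute_circleHomeo (hcomm t)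
  have hφG (t : X) := semiconjBy_translate_of_commute hα hφ (hGH t)
  have hτc : Continuous fun t => (translationNumber (G t) : UnitAddCircle) := by
    simp only [coe_eq_sub_of_semiconjBy_translate (hφG _) x₀]
    exact ((continuous_mapCircle (continuous_of_semiconjBy_translate hα hφ)).comp hγc).sub
      continuous_const
  by_contra hst
  have hτ : (translationNumber (G s) : UnitAddCircle) ≠ translationNumber (G t) := fun hτ => hst <|
    circleHomeo_eq_of_coe_translationNumber_eq (diffeoLifts_antitone hn hH) hα
      (diffeoLifts_antitone (one_le_two.trans hn) (hG s))
      (diffeoLifts_antitone (one_le_two.trans hn) (hG t)) (hGH s) (hGH t) hτ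
  have htop : semiconjTranslations φ (diffeoLifts n) = ⊤ :=
    eq_top_of_continuous_coe (one_mem_semiconjTranslations (translate_mem_diffeoLifts 1)) hτc
      (fun t => ⟨G t, hG t, hφG t⟩) hτ
  obtain ⟨f, hf, hconj⟩ := exists_mem_circleDiffeos_conj_eq_add hφ htop
  exact hnl ⟨f, hf, _, hconj⟩

end Centralizer

/-- Let `h` be an orientation-preserving `C^∞` circle diffeomorphism with irrational
rotation number which is not `C^∞`-conjugate to a rotation. Then every continuous path (for the
uniform `C⁰` topology, expressed by joint continuity) in the `C^∞` centralizer `Z^∞(h)` is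
constant. -/
theorem stmt_8 (h : UnitAddCircle ≃ₜ UnitAddCircle)
    (hsm : IsSmoothCircleDiffeo h)
    (hrot : ∃ H : CircleDeg1Lift,
      (∀ x : ℝ, ((H x : ℝ) : UnitAddCircle) = h (x : UnitAddCircle)) ∧
        Irrational H.translationNumber)
    (hnl : ¬ ∃ φ : UnitAddCircle ≃ₜ UnitAddCircle, IsSmoothCircleDiffeo φ ∧
      ∃ β : ℝ, ∀ x, φ (h (φ.symm x)) = x + (β : UnitAddCircle))
    (γ : unitInterval → UnitAddCircle ≃ₜ UnitAddCircle)
    (hγZ : ∀ t, IsSmoothCircleDiffeo (γ t) ∧ ∀ x, (γ t) (h x) = h ((γ t) x))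
    (hγc : Continuous fun p : unitInterval × UnitAddCircle => (γ p.1) p.2) :
    ∀ t, γ t = γ 0 := by
  simp only [isSmoothCircleDiffeo_iff] at hsm hnl hγZ
  exact fun t => stmt_8_general ENat.LEInfty.out hsm hrot hnl
    (fun t => (hγZ t).1) (fun t => Homeomorph.ext (hγZ t).2) (hγc.comp (.prodMk_left 0)) t 0
end

section
/- An injective holomorphic map f: U → ℂ^q defined on an open set U ⊂ ℂ^q is a biholomorphism onto its image, i.e. f(U) is open and f⁻¹: f(U) → U is holomorphic. -/
/-!
Following Rosay, injectivity of `f'` on `U` is proved by induction on the dimension. Where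
`f'(p) ≠ 0`, some functional `m` has `m (f'(p) v) = 1`; the level set of `m ∘ f` through `p` is a
graph over `ker (m ∘ f'(p))`, and restricting `f` to it gives an injective holomorphic map in one
dimension less. Hence `f'` is everywhere either injective or zero, so the zeros of `det f'` are
exactly the zeros of `f'`.

In dimension one the zeros of `f'` are excluded by the removable singularity theorem applied to the
inverse of `f`. In higher dimension a zero of `det f'` would force, by Hurwitz's theorem, a whole
curve of zeros of `det f'`: some iterated directional derivative of `det f'` vanishes on the zero
set with nonzero derivative, which makes this set a graph near one of its points. Along that
curve `f' = 0`, so `f` is constant there, contradicting injectivity. The inverse function theorem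
finishes the proof.
-/

open Filter Topology Set Metric

section LipschitzDerivative

variable {𝕜 E F : Type*} [NontriviallyNormedField 𝕜] [IsRCLikeNormedField 𝕜]
  [NormedAddCommGroup E] [NormedSpace ℝ E] [NormedSpace 𝕜 E]
  [NormedAddCommGroup F] [NormedSpace 𝕜 F]

theorem norm_sub_sub_fderiv_le_of_lipschitzOnWith {f : E → F} {s : Set E} {C : NNReal} {x y : E}
    (hs : Convex ℝ s) (hf : ∀ z ∈ s, DifferentiableAt 𝕜 f z)
    (hC : LipschitzOnWith C (fderiv 𝕜 f) s) (hx : x ∈ s) (hy : y ∈ s) :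
    ‖f y - f x - fderiv 𝕜 f x (y - x)‖ ≤ C * ‖y - x‖ ^ 2 := by
  have hseg : segment ℝ x y ⊆ s := hs.segment_subset hx hy
  have hbound : ∀ z ∈ segment ℝ x y, ‖fderiv 𝕜 f z - fderiv 𝕜 f x‖ ≤ C * ‖y - x‖ :=
    fun z hz ↦ (hC.norm_sub_le (hseg hz) hx).trans <|
      mul_le_mul_of_nonneg_left (norm_sub_le_of_mem_segment hz) C.2
  rw [sq, ← mul_assoc]
  exact (convex_segment x y).norm_image_sub_le_of_norm_fderiv_le' (fun z hz ↦ hf z (hseg hz))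
    hbound (left_mem_segment ℝ x y) (right_mem_segment ℝ x y)

theorem tendstoUniformlyOn_inv_smul_sub_of_lipschitzOnWith_fderiv {f : E → F} {s V : Set E}
    {C : NNReal} {v : E} (hs : Convex ℝ s) (hf : ∀ z ∈ s, DifferentiableAt 𝕜 f z)
    (hC : LipschitzOnWith C (fderiv 𝕜 f) s) (hVs : V ⊆ s)
    (hadd : ∀ᶠ t : 𝕜 in 𝓝[≠] 0, ∀ y ∈ V, y + t • v ∈ s) :
    TendstoUniformlyOn (fun (t : 𝕜) y ↦ t⁻¹ • (f (y + t • v) - f y)) (fun y ↦ fderiv 𝕜 f y v)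
      (𝓝[≠] 0) V := by
  rw [Metric.tendstoUniformlyOn_iff]
  intro ε hε
  have hsmall : ∀ᶠ t : 𝕜 in 𝓝 0, C * (‖t‖ * ‖v‖ ^ 2) < ε :=
    ContinuousAt.eventually_lt (by fun_prop) continuousAt_const (by simpa using hε)
  filter_upwards [hadd, hsmall.filter_mono nhdsWithin_le_nhds, self_mem_nhdsWithin]
    with t ht hε ht0 y hy
  have ht0 : t ≠ 0 := ht0
  have htaylor := norm_sub_sub_fderiv_le_of_lipschitzOnWith hs hf hC (hVs hy) (ht y hy)
  rw [add_sub_cancel_left, map_smul, norm_smul] at htaylor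
  rw [dist_comm, dist_eq_norm]
  calc ‖t⁻¹ • (f (y + t • v) - f y) - fderiv 𝕜 f y v‖
      = ‖t‖⁻¹ * ‖f (y + t • v) - f y - t • fderiv 𝕜 f y v‖ := by
        rw [← norm_inv, ← norm_smul, smul_sub _ _ (t • _), inv_smul_smul₀ ht0]
    _ ≤ ‖t‖⁻¹ * (C * (‖t‖ * ‖v‖) ^ 2) := by gcongr
    _ = C * (‖t‖ * ‖v‖ ^ 2) := by field_simp [norm_ne_zero_iff.2 ht0]
    _ < ε := hε

end LipschitzDerivative

section Holomorphic

variable {E F : Type*} [NormedAddCommGroup E] [NormedSpace ℂ E]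
  [NormedAddCommGroup F] [NormedSpace ℂ F] {f : E → F} {U : Set E} {x : E}

theorem norm_fderiv_le_of_forall_mem_ball_norm_le {R C : ℝ} (hR : 0 < R)
    (hf : DifferentiableOn ℂ f (ball x R)) (hC : ∀ z ∈ ball x R, ‖f z‖ ≤ C) :
    ‖fderiv ℂ f x‖ ≤ 2 * C / R := by
  refine Complex.norm_fderiv_le_div_of_mapsTo_ball hf (fun z hz ↦ ?_) hR
  rw [mem_closedBall, dist_eq_norm]
  linarith [norm_sub_le (f z) (f x), hC z hz, hC x (mem_ball_self hR)]

theorem exists_lipschitzOnWith_of_differentiableOn (hf : DifferentiableOn ℂ f U) (hU : U ∈ 𝓝 x) :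
    ∃ C, ∃ V ∈ 𝓝 x, LipschitzOnWith C f V := by
  have hfx : ContinuousAt f x := (hf.differentiableAt hU).continuousAt
  obtain ⟨R, hR, hball⟩ := Metric.mem_nhds_iff.1
    (inter_mem hU (hfx.preimage_mem_nhds (ball_mem_nhds (f x) one_pos)))
  have hR3 : 0 < R / 3 := by positivity
  refine ⟨(2 / (2 * (R / 3))).toNNReal, ball x (R / 3), ball_mem_nhds x hR3,
    LipschitzOnWith.of_dist_le_mul fun y hy z hz ↦ ?_⟩
  rw [Real.coe_toNNReal _ (by positivity)]
  have hsub : ball z (2 * (R / 3)) ⊆ ball x R :=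
    ball_subset_ball' (by linarith [mem_ball.1 hz])
  refine Complex.dist_le_div_mul_dist_of_mapsTo_ball
    (hf.mono fun u hu ↦ (hball (hsub hu)).1) (fun u hu ↦ ?_) ?_
  · have hu : dist (f u) (f x) < 1 := (hball (hsub hu)).2
    have hz : dist (f z) (f x) < 1 := (hball (hsub (mem_ball_self (by positivity)))).2
    rw [mem_closedBall]
    linarith [dist_triangle_right (f u) (f z) (f x)]
  · rw [mem_ball]
    linarith [dist_triangle_right y z x, mem_ball.1 hy, mem_ball.1 hz]

theorem exists_lipschitzOnWith_fderiv (hf : DifferentiableOn ℂ f U) (hU : U ∈ 𝓝 x) :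
    ∃ C, ∃ V ∈ 𝓝 x, LipschitzOnWith C (fderiv ℂ f) V := by
  obtain ⟨C, V, hV, hfV⟩ := exists_lipschitzOnWith_of_differentiableOn hf hU
  obtain ⟨R, hR, hball⟩ := Metric.mem_nhds_iff.1 (inter_mem (interior_mem_nhds.2 hU) hV)
  have hR3 : 0 < R / 3 := by positivity
  refine ⟨C * (2 / (R / 3)).toNNReal, ball x (R / 3), ball_mem_nhds x hR3,
    LipschitzOnWith.of_dist_le_mul fun y hy z hz ↦ ?_⟩
  have hdiff : ∀ u ∈ ball x R, DifferentiableAt ℂ f u := fun u hu ↦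
    hf.differentiableAt (mem_interior_iff_mem_nhds.1 (hball hu).1)
  have hmem : ∀ u ∈ ball z (R / 3), u ∈ ball x R ∧ u + (y - z) ∈ ball x R := fun u hu ↦ by
    have hyx := mem_ball.1 hy
    have hzx := mem_ball.1 hz
    simp only [mem_ball, dist_eq_norm] at hu hyx hzx ⊢
    constructor
    · linarith [norm_sub_le_norm_sub_add_norm_sub u z x]
    · calc ‖u + (y - z) - x‖ = ‖(u - z) + (y - x)‖ := by congr 1; abel
        _ ≤ ‖u - z‖ + ‖y - x‖ := norm_add_le _ _
        _ < R := by linarith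
  have hbound : ∀ u ∈ ball z (R / 3), ‖f (u + (y - z)) - f u‖ ≤ C * dist y z := fun u hu ↦ by
    simpa [dist_eq_norm] using
      hfV.dist_le_mul _ (hball (hmem u hu).2).2 _ (hball (hmem u hu).1).2
  -- Cauchy's estimate at `z` for the increment `u ↦ f (u + (y - z)) - f u`.
  have hcauchy := norm_fderiv_le_of_forall_mem_ball_norm_le hR3 (fun u hu ↦
    (((differentiableAt_comp_add_right _).2 (hdiff _ (hmem u hu).2)).sub
      (hdiff u (hmem u hu).1)).differentiableWithinAt) hbound
  have hz' := hmem z (mem_ball_self hR3)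
  rw [fderiv_sub ((differentiableAt_comp_add_right _).2 (hdiff _ hz'.2)) (hdiff z hz'.1),
    fderiv_comp_add_right, add_sub_cancel] at hcauchy
  rw [dist_eq_norm, NNReal.coe_mul, Real.coe_toNNReal _ (by positivity)]
  exact hcauchy.trans_eq (by ring)

theorem contDiffAt_one_of_differentiableOn (hf : DifferentiableOn ℂ f U) (hU : U ∈ 𝓝 x) :
    ContDiffAt ℂ 1 f x := by
  have hcont : ContinuousOn (fderiv ℂ f) (interior U) := fun y hy ↦ by
    obtain ⟨_, V, hV, hlip⟩ :=
      exists_lipschitzOnWith_fderiv hf (mem_interior_iff_mem_nhds.1 hy)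
    exact (hlip.continuousOn.continuousAt hV).continuousWithinAt
  have hcontDiff : ContDiffOn ℂ (0 + 1) f (interior U) :=
    (contDiffOn_succ_iff_fderiv_of_isOpen isOpen_interior).2
      ⟨hf.mono interior_subset, by simp, contDiffOn_zero.2 hcont⟩
  exact hcontDiff.contDiffAt (interior_mem_nhds.2 hU)

theorem uniformCauchySeqOn_fderiv {ι : Type*} {l : Filter ι} {G : ι → E → F} {s : Set E} {R : ℝ}
    (hR : 0 < R) (hs : ∀ y ∈ s, ball y R ⊆ U) (hG : ∀ᶠ n in l, DifferentiableOn ℂ (G n) U)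
    (hcauchy : UniformCauchySeqOn G l U) :
    UniformCauchySeqOn (fun n ↦ fderiv ℂ (G n)) l s := by
  intro u hu
  obtain ⟨ε, hε, hεu⟩ := Metric.mem_uniformity_dist.1 hu
  filter_upwards [hG.prod_mk hG,
    hcauchy _ (dist_mem_uniformity (show 0 < ε * R / 4 by positivity))]
    with ⟨n, m⟩ ⟨hn, hm⟩ hnm y hy
  have hdiff {k : ι} (hk : DifferentiableOn ℂ (G k) U) : DifferentiableAt ℂ (G k) y :=
    hk.differentiableAt (mem_of_superset (ball_mem_nhds y hR) (hs y hy))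
  refine hεu ?_
  calc dist (fderiv ℂ (G n) y) (fderiv ℂ (G m) y) = ‖fderiv ℂ (G n - G m) y‖ := by
        rw [fderiv_sub (hdiff hn) (hdiff hm), dist_eq_norm]
    _ ≤ 2 * (ε * R / 4) / R := norm_fderiv_le_of_forall_mem_ball_norm_le hR
        ((hn.sub hm).mono (hs y hy)) fun z hz ↦ by
          simpa [dist_eq_norm] using (hnm z (hs y hy hz)).le
    _ < ε := by field_simp; linarith

theorem differentiableAt_of_tendstoUniformlyOn [CompleteSpace F] {ι : Type*} {l : Filter ι}
    [l.NeBot] {G : ι → E → F} (hG : ∀ᶠ n in l, DifferentiableOn ℂ (G n) U)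
    (hlim : TendstoUniformlyOn G f l U) (hU : U ∈ 𝓝 x) : DifferentiableAt ℂ f x := by
  obtain ⟨R, hR, hball⟩ := Metric.mem_nhds_iff.1 hU
  have hR2 : 0 < R / 2 := by positivity
  have hcauchy : UniformCauchySeqOn (fun n ↦ fderiv ℂ (G n)) l (ball x (R / 2)) :=
    uniformCauchySeqOn_fderiv hR2 (fun y hy ↦
      (ball_subset_ball' (by linarith [mem_ball.1 hy])).trans hball) hG hlim.uniformCauchySeqOn
  have hex : ∀ y ∈ ball x (R / 2), ∃ A, Tendsto (fun n ↦ fderiv ℂ (G n) y) l (𝓝 A) :=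
    fun y hy ↦ CompleteSpace.complete (hcauchy.cauchy_map hy)
  choose! f' hf' using hex
  have hlim' : TendstoUniformlyOnFilter (fun n ↦ fderiv ℂ (G n)) f' l (𝓝 x) :=
    (hcauchy.tendstoUniformlyOn_of_tendsto hf').tendstoUniformlyOnFilter.mono_right
      (le_principal_iff.2 (ball_mem_nhds x hR2))
  refine (hasFDerivAt_of_tendstoUniformlyOnFilter (f := G) hlim' ?_ ?_).differentiableAt
  · filter_upwards [hG.prod_mk (eventually_mem_nhds_iff.2 hU)] with ⟨n, y⟩ h
    exact (h.1.differentiableAt h.2).hasFDerivAt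
  · filter_upwards [hU] with y hy using hlim.tendsto_at hy

theorem differentiableOn_fderiv_apply [CompleteSpace F] (hU : IsOpen U)
    (hf : DifferentiableOn ℂ f U) (v : E) : DifferentiableOn ℂ (fun x ↦ fderiv ℂ f x v) U := by
  intro x hx
  obtain ⟨C, V, hV, hlip⟩ := exists_lipschitzOnWith_fderiv hf (hU.mem_nhds hx)
  obtain ⟨R, hR, hball⟩ := Metric.mem_nhds_iff.1 (inter_mem (hU.mem_nhds hx) hV)
  have hdiff : ∀ y ∈ ball x R, DifferentiableAt ℂ f y := fun y hy ↦
    hf.differentiableAt (hU.mem_nhds (hball hy).1)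
  have hadd : ∀ᶠ t : ℂ in 𝓝[≠] 0, ∀ y ∈ ball x (R / 2), y + t • v ∈ ball x R := by
    have hsmall : ∀ᶠ t : ℂ in 𝓝 0, ‖t • v‖ < R / 2 :=
      ContinuousAt.eventually_lt (by fun_prop) continuousAt_const (by simpa using half_pos hR)
    filter_upwards [hsmall.filter_mono nhdsWithin_le_nhds] with t ht y hy
    rw [mem_ball, dist_eq_norm] at hy ⊢
    rw [add_sub_right_comm]
    linarith [norm_add_le (y - x) (t • v)]
  have hsub : ball x (R / 2) ⊆ ball x R := ball_subset_ball (by linarith)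
  have hquot := tendstoUniformlyOn_inv_smul_sub_of_lipschitzOnWith_fderiv (convex_ball x R) hdiff
    (hlip.mono fun z hz ↦ (hball hz).2) hsub hadd
  refine (differentiableAt_of_tendstoUniformlyOn ?_ hquot
    (ball_mem_nhds x (half_pos hR))).differentiableWithinAt
  filter_upwards [hadd] with t ht y hy
  exact ((((differentiableAt_comp_add_right _).2 (hdiff _ (ht y hy))).sub
    (hdiff y (hsub hy))).const_smul t⁻¹).differentiableWithinAt

end Holomorphic

section Determinant

variable {E : Type*} [NormedAddCommGroup E] [NormedSpace ℂ E] [FiniteDimensional ℂ E]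

theorem differentiableOn_det_fderiv {f : E → E} {U : Set E} (hU : IsOpen U)
    (hf : DifferentiableOn ℂ f U) : DifferentiableOn ℂ (fun x ↦ (fderiv ℂ f x).det) U := by
  classical
  have : CompleteSpace E := FiniteDimensional.complete ℂ E
  let b := Module.finBasis ℂ E
  have hentry : ∀ i j, DifferentiableOn ℂ (fun x ↦ b.repr (fderiv ℂ f x (b j)) i) U := fun i j ↦
    ((b.coord i).toContinuousLinearMap.differentiable.comp_differentiableOn
      (differentiableOn_fderiv_apply hU hf (b j)))
  have hdet : ∀ x, (fderiv ℂ f x).det = ∑ σ : Equiv.Perm (Fin (Module.finrank ℂ E)),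
      Equiv.Perm.sign σ • ∏ j, b.repr (fderiv ℂ f x (b j)) (σ j) := fun x ↦ by
    simp [ContinuousLinearMap.det, ← LinearMap.det_toMatrix b, Matrix.det_apply,
      LinearMap.toMatrix_apply]
  simp only [hdet]
  exact DifferentiableOn.fun_sum fun σ _ ↦ DifferentiableOn.const_smul (fun x hx ↦
    (HasFDerivWithinAt.finsetProd fun j _ ↦
      (hentry _ j x hx).hasFDerivWithinAt).differentiableWithinAt) _

end Determinant

section CriticalCurves

variable {𝕜 E F X : Type*} [NontriviallyNormedField 𝕜] [IsRCLikeNormedField 𝕜]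
  [NormedAddCommGroup E] [NormedSpace 𝕜 E] [NormedAddCommGroup F] [NormedSpace 𝕜 F]
  [NormedAddCommGroup X] [NormedSpace 𝕜 X] [NormedSpace ℝ X]

theorem not_eventually_fderiv_comp_eq_zero_of_injOn [Nontrivial X] {f : E → F} {U : Set E}
    {γ : X → E} {x₀ : X} (hf : ∀ x ∈ U, DifferentiableAt 𝕜 f x) (hinj : InjOn f U)
    (hγ : ∀ᶠ x in 𝓝 x₀, DifferentiableAt 𝕜 γ x) (hγinj : Function.Injective γ) :
    ¬∀ᶠ x in 𝓝 x₀, γ x ∈ U ∧ fderiv 𝕜 f (γ x) = 0 := by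
  intro hcrit
  obtain ⟨r, hr, hball⟩ := Metric.eventually_nhds_iff_ball.1 (hγ.and hcrit)
  have hfγ : ∀ x ∈ ball x₀ r, HasFDerivAt (f ∘ γ) (0 : X →L[𝕜] F) x := fun x hx ↦ by
    obtain ⟨hγx, hxU, hfx⟩ := hball x hx
    simpa [hfx] using (hf _ hxU).hasFDerivAt.comp x hγx.hasFDerivAt
  have hx₀ : x₀ ∈ ball x₀ r := mem_ball_self hr
  have hconst : ∀ x ∈ ball x₀ r, x = x₀ := fun x hx ↦
    hγinj <| hinj (hball x hx).2.1 (hball x₀ hx₀).2.1 <|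
      isOpen_ball.is_const_of_fderiv_eq_zero (convex_ball x₀ r).isPreconnected
        (fun y hy ↦ (hfγ y hy).differentiableAt.differentiableWithinAt)
        (fun y hy ↦ (hfγ y hy).fderiv) hx hx₀
  have : (𝓝[≠] x₀).NeBot := Module.punctured_nhds_neBot ℝ X x₀
  obtain ⟨x, hx, hne⟩ :=
    Filter.nonempty_of_mem (sdiff_mem_nhdsWithin_compl (ball_mem_nhds x₀ hr) {x₀})
  exact hne (hconst x hx)

end CriticalCurves

section CriticalLines

variable {𝕜 E F : Type*} [RCLike 𝕜] [NormedAddCommGroup E] [NormedSpace 𝕜 E]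
  [NormedAddCommGroup F] [NormedSpace 𝕜 F]

theorem not_eventually_line_mem_of_injOn {f : E → F} {U S : Set E} {p v : E} (hU : IsOpen U)
    (hf : DifferentiableOn 𝕜 f U) (hinj : InjOn f U) (hcrit : ∀ x ∈ U, x ∈ S → fderiv 𝕜 f x = 0)
    (hp : p ∈ U) (hv : v ≠ 0) : ¬∀ᶠ s : 𝕜 in 𝓝 0, p + s • v ∈ S := fun hS ↦ by
  have hmem : ∀ᶠ s : 𝕜 in 𝓝 0, p + s • v ∈ U :=
    ContinuousAt.eventually_mem (by fun_prop) (by simpa using hU.mem_nhds hp)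
  refine not_eventually_fderiv_comp_eq_zero_of_injOn (𝕜 := 𝕜) (γ := fun s : 𝕜 ↦ p + s • v)
    (x₀ := 0) (fun x hx ↦ hf.differentiableAt (hU.mem_nhds hx)) hinj
    (.of_forall fun s ↦ by fun_prop)
    (fun s t hst ↦ smul_left_injective 𝕜 hv (add_left_cancel hst)) ?_
  filter_upwards [hmem, hS] with s hs hsS using ⟨hs, hcrit _ hs hsS⟩

theorem not_eventually_deriv_eq_zero_of_injOn {f : 𝕜 → F} {U : Set 𝕜} {p : 𝕜} (hU : IsOpen U)
    (hf : DifferentiableOn 𝕜 f U) (hinj : InjOn f U) (hp : p ∈ U) :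
    ¬∀ᶠ x in 𝓝 p, deriv f x = 0 := fun hderiv ↦
  not_eventually_fderiv_comp_eq_zero_of_injOn (𝕜 := 𝕜) (γ := id)
    (fun x hx ↦ hf.differentiableAt (hU.mem_nhds hx)) hinj (by simp) Function.injective_id <| by
      filter_upwards [hU.mem_nhds hp, hderiv] with x hx hfx
      exact ⟨hx, by ext; simp [hfx]⟩

end CriticalLines

section VanishingOrder

variable {E : Type*} [NormedAddCommGroup E] [NormedSpace ℂ E] {U : Set E} {p v : E}

theorem iteratedDeriv_comp_line_eq_zero (hU : IsOpen U) {S : Set E}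
    (hS : ∀ h : E → ℂ, DifferentiableOn ℂ h U → EqOn h 0 S → ∀ x ∈ S, fderiv ℂ h x v = 0)
    (hSU : S ⊆ U) (hp : p ∈ S) (n : ℕ) {h : E → ℂ} (hh : DifferentiableOn ℂ h U)
    (hhS : EqOn h 0 S) : iteratedDeriv n (fun s : ℂ ↦ h (p + s • v)) 0 = 0 := by
  induction n generalizing h with
  | zero => simpa using hhS hp
  | succ n ih =>
    have hcont : Tendsto (fun s : ℂ ↦ p + s • v) (𝓝 0) (𝓝 p) :=
      Continuous.tendsto' (by fun_prop) _ _ (by simp)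
    have hderiv : deriv (fun s : ℂ ↦ h (p + s • v)) =ᶠ[𝓝 0] fun s ↦ fderiv ℂ h (p + s • v) v := by
      filter_upwards [hcont.eventually (hU.mem_nhds (hSU hp))] with s hs
      have hline : HasDerivAt (fun s : ℂ ↦ p + s • v) v s := by
        simpa using ((hasDerivAt_id s).smul_const v).const_add p
      exact ((hh.differentiableAt (hU.mem_nhds hs)).hasFDerivAt.comp_hasDerivAt s hline).deriv
    rw [iteratedDeriv_succ', hderiv.iteratedDeriv_eq]
    exact ih (differentiableOn_fderiv_apply hU hh v) fun x hx ↦ hS h hh hhS x hx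

theorem exists_eqOn_zero_fderiv_apply_ne_zero (hU : IsOpen U) {J : E → ℂ}
    (hJ : DifferentiableOn ℂ J U) (hp : p ∈ U) (hJp : J p = 0)
    (hline : ¬ ∀ᶠ s : ℂ in 𝓝 0, J (p + s • v) = 0) :
    ∃ h : E → ℂ, DifferentiableOn ℂ h U ∧ (∀ x ∈ U, J x = 0 → h x = 0) ∧
      ∃ x ∈ U, J x = 0 ∧ fderiv ℂ h x v ≠ 0 := by
  -- Otherwise every iterated `v`-derivative of `J` vanishes on the zero set of `J`.
  by_contra! hne
  have hcont : Tendsto (fun s : ℂ ↦ p + s • v) (𝓝 0) (𝓝 p) :=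
    Continuous.tendsto' (by fun_prop) _ _ (by simp)
  have han : AnalyticAt ℂ (fun s : ℂ ↦ J (p + s • v)) 0 := by
    rw [Complex.analyticAt_iff_eventually_differentiableAt]
    filter_upwards [hcont.eventually (hU.mem_nhds hp)] with s hs
    exact (hJ.differentiableAt (hU.mem_nhds hs)).comp s (by fun_prop)
  have hzero : ∀ n, iteratedDeriv n (fun s : ℂ ↦ J (p + s • v)) 0 = 0 := fun n ↦
    iteratedDeriv_comp_line_eq_zero hU (S := {x ∈ U | J x = 0})
      (fun h hh hhS x hx ↦ hne h hh (fun y hy hJy ↦ hhS ⟨hy, hJy⟩) x hx.1 hx.2)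
      (fun x hx ↦ hx.1) ⟨hp, hJp⟩ n hJ fun x hx ↦ hx.2
  refine hline (analyticOrderAt_eq_top.1 (ENat.eq_top_iff_forall_ge.2 fun n ↦ ?_))
  exact (natCast_le_analyticOrderAt_iff_iteratedDeriv_eq_zero han).2 fun i _ ↦ hzero i

end VanishingOrder

section Hurwitz

theorem exists_eq_zero_of_norm_lt_of_forall_mem_frontier_le_norm {E : Type*} [NormedAddCommGroup E]
    [NormedSpace ℂ E] [Nontrivial E] {f : E → ℂ} {U : Set E} {m : ℝ} {z₀ : E}
    (hU : Bornology.IsBounded U) (hf : DiffContOnCl ℂ f U) (hz₀ : z₀ ∈ U) (hm : ‖f z₀‖ < m)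
    (hfr : ∀ z ∈ frontier U, m ≤ ‖f z‖) : ∃ z ∈ U, f z = 0 := by
  by_contra! hne
  have hm0 : 0 < m := (norm_nonneg _).trans_lt hm
  have hne' : ∀ z ∈ closure U, f z ≠ 0 := fun z hz ↦ by
    by_cases hzU : z ∈ U
    · exact hne z hzU
    · exact norm_pos_iff.1 (hm0.trans_le (hfr z ⟨hz, fun h ↦ hzU (interior_subset h)⟩))
  have hinv : ‖(f z₀)⁻¹‖ ≤ m⁻¹ :=
    Complex.norm_le_of_forall_mem_frontier_norm_le hU (hf.inv hne')
      (fun z hz ↦ by simpa using inv_anti₀ hm0 (hfr z hz)) (subset_closure hz₀)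
  rw [norm_inv, inv_le_inv₀ (norm_pos_iff.2 (hne z₀ hz₀)) hm0] at hinv
  exact hm.not_ge hinv

variable {X : Type*} [TopologicalSpace X] {G : X × ℂ → ℂ} {x₀ : X} {c : ℂ}

theorem eventually_exists_mem_ball_eq_zero {r : ℝ} (hr : 0 < r)
    (hcont : ∀ s ∈ closedBall c r, ContinuousAt G (x₀, s))
    (hdiff : ∀ᶠ x in 𝓝 x₀, ∀ s ∈ closedBall c r, DifferentiableAt ℂ (fun s ↦ G (x, s)) s)
    (hzero : G (x₀, c) = 0) (hne : ∀ s ∈ sphere c r, G (x₀, s) ≠ 0) :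
    ∀ᶠ x in 𝓝 x₀, ∃ s ∈ ball c r, G (x, s) = 0 := by
  have hslice : ContinuousOn (fun s ↦ ‖G (x₀, s)‖) (sphere c r) := fun s hs ↦
    (ContinuousAt.comp (f := fun s ↦ (x₀, s)) (hcont s (sphere_subset_closedBall hs))
      (Continuous.prodMk_right x₀).continuousAt).norm.continuousWithinAt
  obtain ⟨m, hm, hmle⟩ := (isCompact_sphere c r).exists_forall_le' hslice
    fun s hs ↦ norm_pos_iff.2 (hne s hs)
  have hsphere : ∀ᶠ x in 𝓝 x₀, ∀ s ∈ sphere c r, m / 2 < ‖G (x, s)‖ :=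
    (isCompact_sphere c r).eventually_forall_of_forall_eventually fun s hs ↦
      (hcont s (sphere_subset_closedBall hs)).norm.eventually_const_lt
        ((half_lt_self hm).trans_le (hmle s hs))
  have hcenter : ∀ᶠ x in 𝓝 x₀, ‖G (x, c)‖ < m / 2 :=
    (ContinuousAt.comp (f := fun x ↦ (x, c)) (hcont c (mem_closedBall_self hr.le))
      (Continuous.prodMk_left c).continuousAt).norm.eventually_lt_const (by simpa [hzero] using hm)
  filter_upwards [hdiff, hsphere, hcenter] with x hx hxs hxc
  refine exists_eq_zero_of_norm_lt_of_forall_mem_frontier_le_norm isBounded_ball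
    (DifferentiableOn.diffContOnCl ?_) (mem_ball_self hr) hxc
    fun s hs ↦ (hxs s (frontier_ball_subset_sphere hs)).le
  rw [closure_ball c hr.ne']
  exact fun s hs ↦ (hx s hs).differentiableWithinAt

theorem eventually_exists_and_eq_zero {P : X × ℂ → Prop}
    (hG : ∀ᶠ z in 𝓝 (x₀, c), ContinuousAt G z ∧ DifferentiableAt ℂ (fun s ↦ G (z.1, s)) z.2)
    (hzero : G (x₀, c) = 0) (hne : ¬∀ᶠ s in 𝓝 c, G (x₀, s) = 0)
    (hP : ∀ᶠ z in 𝓝 (x₀, c), P z) : ∀ᶠ x in 𝓝 x₀, ∃ s, P (x, s) ∧ G (x, s) = 0 := by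
  have hslice : Tendsto (fun s ↦ (x₀, s)) (𝓝 c) (𝓝 (x₀, c)) :=
    (Continuous.prodMk_right x₀).tendsto c
  have hisolated : ∀ᶠ s in 𝓝 c, s ≠ c → G (x₀, s) ≠ 0 :=
    eventually_nhdsWithin_iff.1 <| (AnalyticAt.eventually_eq_zero_or_eventually_ne_zero <|
      Complex.analyticAt_iff_eventually_differentiableAt.2 <|
        (hslice.eventually hG).mono fun s hs ↦ hs.2).resolve_left hne
  obtain ⟨r, hr, hball⟩ := nhds_basis_closedBall.eventually_iff.1
    ((hslice.eventually (hG.and hP).eventually_nhds).and hisolated)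
  have hnear : ∀ᶠ x in 𝓝 x₀, ∀ s ∈ closedBall c r,
      DifferentiableAt ℂ (fun s ↦ G (x, s)) s ∧ P (x, s) :=
    (isCompact_closedBall c r).eventually_forall_of_forall_eventually fun s hs ↦
      (hball hs).1.mono fun z hz ↦ ⟨hz.1.2, hz.2⟩
  have hroot := eventually_exists_mem_ball_eq_zero hr
    (fun s hs ↦ (hball hs).1.self_of_nhds.1.1) (hnear.mono fun x hx s hs ↦ (hx s hs).1) hzero
    fun s hs ↦ (hball (sphere_subset_closedBall hs)).2 (ne_of_mem_sphere hs hr.ne')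
  filter_upwards [hnear, hroot] with x hx ⟨s, hs, hGs⟩
  exact ⟨s, (hx s (ball_subset_closedBall hs)).2, hGs⟩

end Hurwitz

section LevelSets

variable {𝕜 E F G : Type*} [RCLike 𝕜] [NormedAddCommGroup E] [NormedSpace 𝕜 E]
  [NormedAddCommGroup F] [NormedSpace 𝕜 F] [NormedAddCommGroup G] [NormedSpace 𝕜 G]

theorem exists_contDiffAt_forall_eq_iff_eq [CompleteSpace G] {n : WithTop ℕ∞} (hn : n ≠ 0)
    {h : E → 𝕜} {p v : E} (hh : ContDiffAt 𝕜 n h p) (hv : fderiv 𝕜 h p v ≠ 0) (ι : G →L[𝕜] E) :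
    ∃ φ : G → 𝕜, ContDiffAt 𝕜 n φ 0 ∧
      ∀ᶠ z : G × 𝕜 in 𝓝 0, h (p + ι z.1 + z.2 • v) = h p ↔ φ z.1 = z.2 := by
  let L : G × 𝕜 →L[𝕜] E := ι.coprod (ContinuousLinearMap.toSpanSingleton 𝕜 v)
  have hp : p + L 0 = p := by simp
  have hH : ContDiffAt 𝕜 n (fun z ↦ h (p + L z)) 0 :=
    ContDiffAt.comp 0 (hp.symm ▸ hh) (by fun_prop)
  have hfderiv : fderiv 𝕜 (fun z ↦ h (p + L z)) 0 = (fderiv 𝕜 h p).comp L := by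
    have hL : HasFDerivAt (fun z ↦ p + L z) L 0 := L.hasFDerivAt.const_add p
    have hhp : HasFDerivAt h (fderiv 𝕜 h p) (p + L 0) :=
      hp.symm ▸ (hh.differentiableAt hn).hasFDerivAt
    exact (hhp.comp 0 hL).fderiv
  have hinv : (fderiv 𝕜 (fun z ↦ h (p + L z)) 0 ∘L .inr 𝕜 G 𝕜).IsInvertible := by
    rw [hfderiv]
    exact .of_inverse (g := ContinuousLinearMap.toSpanSingleton 𝕜 (fderiv 𝕜 h p v)⁻¹)
      (by ext; simp [L, hv]) (by ext; simp [L, hv])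
  refine ⟨hH.implicitFunction hn hinv, hH.contDiffAt_implicitFunction hn hinv, ?_⟩
  filter_upwards [hH.eventually_apply_eq_iff_implicitFunction hn hinv] with z hz
  simpa [L, add_assoc] using hz

theorem exists_contDiffOn_forall_apply_eq [CompleteSpace G] {h : E → 𝕜} {p v : E} {U : Set E}
    (hU : U ∈ 𝓝 p) (hh : ContDiffAt 𝕜 1 h p) (hv : fderiv 𝕜 h p v ≠ 0) (ι : G →L[𝕜] E) :
    ∃ (φ : G → 𝕜) (W : Set G), IsOpen W ∧ 0 ∈ W ∧ ContDiffOn 𝕜 1 φ W ∧ φ 0 = 0 ∧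
      ∀ k ∈ W, p + ι k + φ k • v ∈ U ∧ h (p + ι k + φ k • v) = h p := by
  obtain ⟨φ, hφ, hgraph⟩ := exists_contDiffAt_forall_eq_iff_eq one_ne_zero hh hv ι
  have hφ0 : φ 0 = 0 := hgraph.self_of_nhds.1 (by simp)
  have hcont : Tendsto (fun k ↦ (k, φ k)) (𝓝 0) (𝓝 (0, 0)) := by
    simpa only [hφ0, id] using (continuousAt_id.prodMk hφ.continuousAt).tendsto
  have hmem : ∀ᶠ k in 𝓝 0, p + ι k + φ k • v ∈ U :=
    ContinuousAt.eventually_mem (by have := hφ.continuousAt; fun_prop) (by simpa [hφ0] using hU)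
  have hlevel : ∀ᶠ k in 𝓝 0, h (p + ι k + φ k • v) = h p :=
    (hcont.eventually hgraph).mono fun k hk ↦ hk.2 rfl
  obtain ⟨W, hW, hWo, h0W⟩ := _root_.mem_nhds_iff.1
    ((hφ.eventually (by simp)).and (hmem.and hlevel))
  exact ⟨φ, W, hWo, h0W, fun k hk ↦ (hW hk).1.contDiffWithinAt, hφ0, fun k hk ↦ (hW hk).2⟩

theorem exists_injOn_ker_of_injOn [CompleteSpace G] {f : E → F} {U : Set E} {p v : E}
    (hU : IsOpen U) (hf : ContDiffOn 𝕜 1 f U) (hinj : InjOn f U) (hp : p ∈ U) {m : F →L[𝕜] 𝕜}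
    (hm : m (fderiv 𝕜 f p v) = 1) {ι : G →L[𝕜] E} (hι : Function.Injective ι)
    (hker : ∀ k, m (fderiv 𝕜 f p (ι k)) = 0) :
    ∃ (W : Set G) (g : G → m.ker), IsOpen W ∧ 0 ∈ W ∧ ContDiffOn 𝕜 1 g W ∧ InjOn g W ∧
      ∀ k, (fderiv 𝕜 g 0 k : F) = fderiv 𝕜 f p (ι k) := by
  set A := fderiv 𝕜 f p
  have hfp : ContDiffAt 𝕜 1 f p := hf.contDiffAt (hU.mem_nhds hp)
  have hfA : HasFDerivAt f A p := (hfp.differentiableAt one_ne_zero).hasFDerivAt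
  obtain ⟨φ, W, hW, h0W, hφ, hφ0, hψ⟩ := exists_contDiffOn_forall_apply_eq (hU.mem_nhds hp)
    (m.contDiff.contDiffAt.comp p hfp) (v := v)
    (by simp [(m.hasFDerivAt.comp p hfA).fderiv, hm]) ι
  let ψ (k : G) : E := p + ι k + φ k • v
  have hψ_contDiffOn : ContDiffOn 𝕜 1 ψ W := by fun_prop
  let π : F →L[𝕜] m.ker := m.projKerOfRightInverse
    (ContinuousLinearMap.toSpanSingleton 𝕜 (A v)) fun t ↦ by simp [hm]
  have hπ : ∀ y, (π y : F) = y - m y • A v := fun y ↦ by simp [π]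
  refine ⟨W, fun k ↦ π (f (ψ k)), hW, h0W, ?_, fun k hk k' hk' hkk' ↦ ?_, fun k ↦ ?_⟩
  · exact π.contDiff.comp_contDiffOn (hf.comp hψ_contDiffOn fun k hk ↦ (hψ k hk).1)
  · obtain ⟨hψk, hmk : m (f (ψ k)) = m (f p)⟩ := hψ k hk
    obtain ⟨hψk', hmk' : m (f (ψ k')) = m (f p)⟩ := hψ k' hk'
    have hψψ : ψ k = ψ k' := hinj hψk hψk' <| by
      simpa [hπ, hmk, hmk'] using congrArg Subtype.val hkk'
    have hφφ : φ k = φ k' := by simpa [ψ, hker, hm] using congrArg (m ∘L A) hψψ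
    exact hι (by simpa [ψ, hφφ] using hψψ)
  · have hφ' := ((hφ.contDiffAt (hW.mem_nhds h0W)).differentiableAt one_ne_zero).hasFDerivAt
    have hψ' : HasFDerivAt ψ (ι + (fderiv 𝕜 φ 0).smulRight v) 0 :=
      (ι.hasFDerivAt.const_add p).add (hφ'.smul_const v)
    have hfψ : HasFDerivAt f A (ψ 0) := by simpa [ψ, hφ0] using hfA
    have hg : HasFDerivAt (fun k ↦ π (f (ψ k))) (π ∘L A ∘L (ι + (fderiv 𝕜 φ 0).smulRight v)) 0 :=
      π.hasFDerivAt.comp 0 (hfψ.comp 0 hψ')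
    simp [hg.fderiv, hπ, hker, hm]

end LevelSets

section OneVariable

theorem nhds_le_map_nhds_of_injOn {f : ℂ → ℂ} {U : Set ℂ} {p : ℂ} (hU : IsOpen U)
    (hf : DifferentiableOn ℂ f U) (hinj : InjOn f U) (hp : p ∈ U) : 𝓝 (f p) ≤ map f (𝓝 p) := by
  refine (hf.analyticAt (hU.mem_nhds hp)).eventually_constant_or_nhds_le_map_nhds.resolve_left
    fun hconst ↦ not_eventually_deriv_eq_zero_of_injOn hU hf hinj hp ?_
  simpa only [EventuallyEq, deriv_const'] using EventuallyEq.deriv hconst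

theorem deriv_ne_zero_of_injOn {f : ℂ → ℂ} {U : Set ℂ} {p : ℂ} (hU : IsOpen U)
    (hf : DifferentiableOn ℂ f U) (hinj : InjOn f U) (hp : p ∈ U) : deriv f p ≠ 0 := by
  let g := Function.invFunOn f U
  have hg : LeftInvOn g f U := hinj.leftInvOn_invFunOn
  have hopen : ∀ x ∈ U, 𝓝 (f x) ≤ map f (𝓝 x) := fun x ↦ nhds_le_map_nhds_of_injOn hU hf hinj
  have hg_cont : ∀ x ∈ U, ContinuousAt g (f x) := fun x hx ↦ by
    have : Tendsto (g ∘ f) (𝓝 x) (𝓝 x) := tendsto_id.congr' <| by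
      filter_upwards [hU.mem_nhds hx] with z hz using (hg hz).symm
    rw [ContinuousAt, hg hx]
    exact (tendsto_map'_iff.2 this).mono_left (hopen x hx)
  have hfg : ∀ x ∈ U, ∀ᶠ y in 𝓝 (f x), f (g y) = y := fun x hx ↦
    hopen x hx <| mem_map.2 <| by filter_upwards [hU.mem_nhds hx] with z hz using congrArg f (hg hz)
  have hf_deriv : ∀ x ∈ U, HasDerivAt f (deriv f x) x := fun x hx ↦
    (hf.differentiableAt (hU.mem_nhds hx)).hasDerivAt
  have hisolated : ∀ᶠ x in 𝓝 p, x ≠ p → deriv f x ≠ 0 := eventually_nhdsWithin_iff.1 <|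
    (hf.analyticAt (hU.mem_nhds hp)).deriv.eventually_eq_zero_or_eventually_ne_zero.resolve_left
      (not_eventually_deriv_eq_zero_of_injOn hU hf hinj hp)
  have hg_punctured : ∀ᶠ y in 𝓝[≠] (f p), DifferentiableAt ℂ g y :=
    eventually_nhdsWithin_iff.2 <| hopen p hp <| mem_map.2 <| by
      filter_upwards [hisolated, hU.mem_nhds hp] with x hx hxU hne
      exact (HasDerivAt.of_local_left_inverse (hg_cont x hxU) ((hg hxU).symm ▸ hf_deriv x hxU)
        (hx (ne_of_apply_ne f hne)) (hfg x hxU)).differentiableAt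
  have hg_diff : DifferentiableAt ℂ g (f p) :=
    (Complex.analyticAt_of_differentiable_on_punctured_nhds_of_continuousAt hg_punctured
      (hg_cont p hp)).differentiableAt
  have hchain : deriv g (f p) * deriv f p = 1 :=
    (hg_diff.hasDerivAt.comp p (hf_deriv p hp)).unique <| (hasDerivAt_id p).congr_of_eventuallyEq <|
      by filter_upwards [hU.mem_nhds hp] with z hz using hg hz
  exact right_ne_zero_of_mul_eq_one hchain

end OneVariable

section Critical

variable {E F : Type*} [NormedAddCommGroup E] [NormedSpace ℂ E] [NormedAddCommGroup F]
  [NormedSpace ℂ F]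

theorem ne_zero_of_injOn_of_fderiv_eq_zero {f : E → F} {J : E → ℂ}
    {U : Set E} {v w : E} (hvw : LinearIndependent ℂ ![v, w]) (hU : IsOpen U)
    (hf : DifferentiableOn ℂ f U) (hinj : InjOn f U) (hJ : DifferentiableOn ℂ J U)
    (hcrit : ∀ x ∈ U, J x = 0 → fderiv ℂ f x = 0) {p : E} (hp : p ∈ U) : J p ≠ 0 := fun hJp ↦ by
  have hline : ∀ x ∈ U, ¬∀ᶠ s : ℂ in 𝓝 0, J (x + s • v) = 0 := fun x hx ↦
    not_eventually_line_mem_of_injOn (S := {y | J y = 0}) hU hf hinj hcrit hx (hvw.ne_zero 0)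
  obtain ⟨h, hh, hhJ, x, hx, hJx, hhv⟩ :=
    exists_eqOn_zero_fderiv_apply_ne_zero hU hJ hp hJp (hline p hp)
  obtain ⟨φ, hφ, hgraph⟩ := exists_contDiffAt_forall_eq_iff_eq one_ne_zero
    (contDiffAt_one_of_differentiableOn hh (hU.mem_nhds hx)) hhv
    (ContinuousLinearMap.toSpanSingleton ℂ w)
  -- Every line parallel to `v` near `x` meets `{J = 0} ⊆ {h = 0}`, and does so on the graph of `φ`.
  let σ (z : ℂ × ℂ) : E := x + z.1 • w + z.2 • v
  have hσ : ∀ᶠ z in 𝓝 (0 : ℂ × ℂ), σ z ∈ U :=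
    ContinuousAt.eventually_mem (by fun_prop) (by simpa [σ] using hU.mem_nhds hx)
  have hroot : ∀ᶠ t in 𝓝 0, ∃ s, (σ (t, s) ∈ U ∧ (h (σ (t, s)) = h x ↔ φ t = s)) ∧
      J (σ (t, s)) = 0 := by
    refine eventually_exists_and_eq_zero (G := J ∘ σ) (c := 0) (hσ.mono fun z hz ↦ ?_)
      (by simpa [σ] using hJx) (by simpa [σ] using hline x hx) (hσ.and (by simpa using hgraph))
    have hJz : DifferentiableAt ℂ J (σ z) := hJ.differentiableAt (hU.mem_nhds hz)
    exact ⟨hJz.continuousAt.comp (by fun_prop),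
      hJz.comp z.2 (f := fun s ↦ σ (z.1, s)) (by fun_prop)⟩
  refine not_eventually_fderiv_comp_eq_zero_of_injOn (𝕜 := ℂ) (γ := fun t ↦ σ (t, φ t)) (x₀ := 0)
    (fun y hy ↦ hf.differentiableAt (hU.mem_nhds hy)) hinj ?_ (fun t t' htt' ↦ ?_) ?_
  · filter_upwards [hφ.eventually (by simp)] with t ht
    have := ht.differentiableAt one_ne_zero
    fun_prop
  · have hrel : (φ t - φ t') • v + (t - t') • w = 0 := by
      linear_combination (norm := module) htt'
    exact sub_eq_zero.1 (LinearIndependent.pair_iff.1 hvw _ _ hrel).2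
  · filter_upwards [hroot] with t ⟨s, ⟨hsU, hs⟩, hJs⟩
    obtain rfl : φ t = s := hs.1 ((hhJ _ hsU hJs).trans (hhJ x hx hJx).symm)
    exact ⟨hsU, hcrit _ hsU hJs⟩

end Critical

section EqualDimensions

open Module

theorem fderiv_ne_zero_of_injOn_of_finrank_eq_one {E F : Type*} [NormedAddCommGroup E]
    [NormedSpace ℂ E] [NormedAddCommGroup F] [NormedSpace ℂ F] (hE : finrank ℂ E = 1)
    (hF : finrank ℂ F = 1) {f : E → F} {U : Set E} {p : E} (hU : IsOpen U)
    (hf : DifferentiableOn ℂ f U) (hinj : InjOn f U) (hp : p ∈ U) : fderiv ℂ f p ≠ 0 := fun hfp ↦ by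
  have : FiniteDimensional ℂ E := .of_finrank_eq_succ hE
  have : FiniteDimensional ℂ F := .of_finrank_eq_succ hF
  let a : ℂ ≃L[ℂ] E := .ofFinrankEq (by rw [hE, finrank_self])
  let b : F ≃L[ℂ] ℂ := .ofFinrankEq (by rw [hF, finrank_self])
  refine deriv_ne_zero_of_injOn (f := b ∘ f ∘ a) (p := a.symm p) (hU.preimage a.continuous)
    (b.differentiable.comp_differentiableOn
      (hf.comp a.differentiable.differentiableOn (mapsTo_preimage a U)))
    (b.injective.comp_injOn (hinj.comp a.injective.injOn (mapsTo_preimage a U)))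
    (by simpa using hp) ?_
  rw [← fderiv_apply_one_eq_deriv, b.comp_fderiv, a.comp_right_fderiv]
  simp [hfp]

variable {E F : Type*} [NormedAddCommGroup E] [NormedSpace ℂ E]
  [NormedAddCommGroup F] [NormedSpace ℂ F] [FiniteDimensional ℂ E] [FiniteDimensional ℂ F]

theorem fderiv_ne_zero_of_injOn_of_one_lt_finrank (hE : 1 < finrank ℂ E)
    (hEF : finrank ℂ E = finrank ℂ F) {f : E → F} {U : Set E} {p : E} (hU : IsOpen U)
    (hf : DifferentiableOn ℂ f U) (hinj : InjOn f U)
    (hrank : ∀ x ∈ U, fderiv ℂ f x ≠ 0 → Function.Injective (fderiv ℂ f x)) (hp : p ∈ U) :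
    fderiv ℂ f p ≠ 0 := fun hfp ↦ by
  have : CompleteSpace E := FiniteDimensional.complete ℂ E
  have : Nontrivial E := nontrivial_of_finrank_pos (R := ℂ) (by lia)
  obtain ⟨v, hv⟩ := exists_ne (0 : E)
  obtain ⟨w, hvw⟩ := exists_linearIndependent_pair_of_one_lt_finrank hE hv
  let e : F ≃L[ℂ] E := .ofFinrankEq hEF.symm
  have hdet : ∀ x, (fderiv ℂ (e ∘ f) x).det = 0 ↔ ¬Function.Injective (fderiv ℂ f x) := fun x ↦ by
    rw [e.comp_fderiv, ContinuousLinearMap.det, LinearMap.det_eq_zero_iff_ker_ne_bot, Ne,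
      LinearMap.ker_eq_bot]
    simp
  refine ne_zero_of_injOn_of_fderiv_eq_zero hvw hU hf hinj
    (differentiableOn_det_fderiv hU (e.differentiable.comp_differentiableOn hf))
    (fun x hx hJx ↦ ?_) hp ((hdet p).2 ?_)
  · exact not_imp_comm.1 (hrank x hx) ((hdet x).1 hJx)
  · exact fun h ↦ hv (h (by simp [hfp]))

theorem injective_fderiv_of_forall_submodule {n : ℕ} (hE : finrank ℂ E = n + 1)
    (hF : finrank ℂ F = n + 1) {f : E → F} {U : Set E} {p : E} (hU : IsOpen U)
    (hf : DifferentiableOn ℂ f U) (hinj : InjOn f U) (hp : p ∈ U) (hne : fderiv ℂ f p ≠ 0)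
    (hsub : ∀ (K : Submodule ℂ E) (L : Submodule ℂ F), finrank ℂ K = n → finrank ℂ L = n →
      ∀ (W : Set K) (g : K → L), IsOpen W → 0 ∈ W → DifferentiableOn ℂ g W → InjOn g W →
        Function.Injective (fderiv ℂ g 0)) :
    Function.Injective (fderiv ℂ f p) := by
  obtain ⟨v, hv⟩ := DFunLike.ne_iff.1 hne
  obtain ⟨m, hm⟩ := SeparatingDual.exists_eq_one (R := ℂ) hv
  let l := m ∘L fderiv ℂ f p
  have hl : finrank ℂ l.ker + 1 = finrank ℂ E := Dual.finrank_ker_add_one_of_ne_zero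
    (f := (l : E →ₗ[ℂ] ℂ)) fun h ↦ by simpa [l, hm] using DFunLike.congr_fun h v
  have hmker : finrank ℂ m.ker + 1 = finrank ℂ F := Dual.finrank_ker_add_one_of_ne_zero
    (f := (m : F →ₗ[ℂ] ℂ)) fun h ↦ by simpa [hm] using DFunLike.congr_fun h (fderiv ℂ f p v)
  have : CompleteSpace l.ker := FiniteDimensional.complete ℂ _
  obtain ⟨W, g, hW, h0W, hg, hginj, hgf⟩ := exists_injOn_ker_of_injOn hU
    (fun x hx ↦ (contDiffAt_one_of_differentiableOn hf (hU.mem_nhds hx)).contDiffWithinAt)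
    hinj hp hm (ι := l.ker.subtypeL) Subtype.val_injective fun k ↦ k.2
  have hg' : Function.Injective (fderiv ℂ g 0) :=
    hsub _ _ (by lia) (by lia) W g hW h0W (hg.differentiableOn one_ne_zero) hginj
  refine (injective_iff_map_eq_zero _).2 fun a ha ↦ ?_
  have hga : fderiv ℂ g 0 ⟨a, by simp [l, ha]⟩ = 0 := by ext; simp [hgf, ha]
  exact congrArg Subtype.val (hg' (hga.trans (map_zero _).symm))

theorem injective_fderiv_of_injOn (hEF : finrank ℂ E = finrank ℂ F) {f : E → F} {U : Set E}
    {p : E} (hU : IsOpen U) (hf : DifferentiableOn ℂ f U) (hinj : InjOn f U) (hp : p ∈ U) :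
    Function.Injective (fderiv ℂ f p) := by
  induction hn : finrank ℂ E generalizing E F with
  | zero =>
    have := finrank_zero_iff.1 hn
    exact Function.injective_of_subsingleton _
  | succ n ih =>
    have hrank : ∀ x ∈ U, fderiv ℂ f x ≠ 0 → Function.Injective (fderiv ℂ f x) := fun x hx hne ↦
      injective_fderiv_of_forall_submodule hn (hEF ▸ hn) hU hf hinj hx hne
        fun K L hK hL W g hW h0W hg hginj ↦ ih (hK.trans hL.symm) hW hg hginj h0W hK
    refine hrank p hp ?_
    obtain rfl | hn0 := n.eq_zero_or_pos
    · exact fderiv_ne_zero_of_injOn_of_finrank_eq_one hn (hEF ▸ hn) hU hf hinj hp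
    · exact fderiv_ne_zero_of_injOn_of_one_lt_finrank (by lia) hEF hU hf hinj hrank hp

theorem exists_hasStrictFDerivAt_equiv_of_injOn (hEF : finrank ℂ E = finrank ℂ F) {f : E → F}
    {U : Set E} {p : E} (hU : IsOpen U) (hf : DifferentiableOn ℂ f U) (hinj : InjOn f U)
    (hp : p ∈ U) : ∃ A : E ≃L[ℂ] F, HasStrictFDerivAt f (A : E →L[ℂ] F) p :=
  ⟨(LinearMap.linearEquivOfInjective (fderiv ℂ f p : E →ₗ[ℂ] F)
      (injective_fderiv_of_injOn hEF hU hf hinj hp) hEF).toContinuousLinearEquiv,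
    (contDiffAt_one_of_differentiableOn hf (hU.mem_nhds hp)).hasStrictFDerivAt one_ne_zero⟩

end EqualDimensions

theorem stmt_12_general {E F : Type*} [NormedAddCommGroup E] [NormedSpace ℂ E]
    [NormedAddCommGroup F] [NormedSpace ℂ F] [FiniteDimensional ℂ E] [FiniteDimensional ℂ F]
    (hEF : Module.finrank ℂ E = Module.finrank ℂ F) {U : Set E} (hU : IsOpen U) {f : E → F}
    (hf : DifferentiableOn ℂ f U) (hinj : InjOn f U) :
    IsOpen (f '' U) ∧ ∃ g : F → E,
      DifferentiableOn ℂ g (f '' U) ∧ (∀ z ∈ U, g (f z) = z) ∧ ∀ w ∈ f '' U, f (g w) = w := by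
  have : CompleteSpace E := FiniteDimensional.complete ℂ E
  have hstrict := fun z (hz : z ∈ U) ↦ exists_hasStrictFDerivAt_equiv_of_injOn hEF hU hf hinj hz
  have hleft : LeftInvOn (Function.invFunOn f U) f U := hinj.leftInvOn_invFunOn
  refine ⟨isOpen_iff_mem_nhds.2 ?_, Function.invFunOn f U, ?_, fun z hz ↦ hleft hz, ?_⟩ <;>
    rintro _ ⟨z, hz, rfl⟩
  · obtain ⟨A, hA⟩ := hstrict z hz
    exact hA.map_nhds_eq_of_equiv ▸ image_mem_map (hU.mem_nhds hz)
  · obtain ⟨A, hA⟩ := hstrict z hz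
    exact (hA.to_local_left_inverse (mem_of_superset (hU.mem_nhds hz)
      hleft)).hasFDerivAt.differentiableAt.differentiableWithinAt
  · exact congrArg f (hleft hz)

/-- An injective holomorphic map `f : U → ℂ^q` on an open set `U ⊆ ℂ^q` is a
biholomorphism onto its image: `f(U)` is open and the inverse is holomorphic on `f(U)`. -/
theorem stmt_12 (q : ℕ) (U : Set (EuclideanSpace ℂ (Fin q))) (hU : IsOpen U)
    (f : EuclideanSpace ℂ (Fin q) → EuclideanSpace ℂ (Fin q))
    (hf : DifferentiableOn ℂ f U) (hinj : Set.InjOn f U) :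
    IsOpen (f '' U) ∧ ∃ g : EuclideanSpace ℂ (Fin q) → EuclideanSpace ℂ (Fin q),
      DifferentiableOn ℂ g (f '' U) ∧ (∀ z ∈ U, g (f z) = z) ∧ ∀ w ∈ f '' U, f (g w) = w :=
  stmt_12_general rfl hU hf hinj
end
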